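/- arXiv:2208.05752 — 2 statements merged into one kernel-verified Lean document; each statement's English description precedes it below -/
import Mathlib

section
/- There are no integers n > n₁ ≥ 1 and m > m₁ ≥ 1 with n ≥ 300 satisfying L_n − L_{n₁} = 𝒫_m − 𝒫_{m₁}. Equivalently, every solution in integers n > n₁ ≥ 1, m > m₁ ≥ 1 of the equation 𝒫_m − L_n = 𝒫_{m₁} − L_{n₁} has n < 300. -/
/-- The Padovan sequence: 𝒫₀ = 𝒫₁ = 𝒫₂ = 1, 𝒫_{k+3} = 𝒫_{k+1} + 𝒫_k. -/
def padovan : ℕ → ℕ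
  | 0 => 1
  | 1 => 1
  | 2 => 1
  | k + 3 => padovan (k + 1) + padovan k

/-- The Lucas sequence: L₀ = 2, L₁ = 1, L_{k+2} = L_{k+1} + L_k. -/
def lucasSeq : ℕ → ℕ
  | 0 => 2
  | 1 => 1
  | k + 2 => lucasSeq (k + 1) + lucasSeq k

/-- Determinant upper bound. -/
theorem det_upper (N : ℕ) {ι : Type} [Fintype ι] [DecidableEq ι] (hN : Fintype.card ι = N)
    (A : Matrix ι ι ℝ) (c : ι → Fin N → ℝ) (δ : ι → ι → ℝ) (x : ι → ℝ) (X E : ℝ) (G : ι → ℝ)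
    (hE : 1 ≤ E) (hA : ∀ i j, A i j = (∑ t : Fin N, c i t * x j ^ (t : ℕ)) + δ i j)
    (hx : ∀ j, |x j| ≤ X)
    (hc : ∀ i, ∑ t : Fin N, |c i t| * (E * X) ^ (t : ℕ) ≤ G i)
    (hδ : ∀ i j, |δ i j| * E ^ N ≤ G i) :
    |A.det| * E ^ (N * (N - 1) / 2) ≤ (N.factorial : ℝ) * ∏ i, (2 * G i) := by
  classical
  rcases isEmpty_or_nonempty ι with hι | ⟨⟨i0⟩⟩
  · have : N = 0 := by rw [← hN]; simp
    subst this
    simp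
  have hX : 0 ≤ X := (abs_nonneg _).trans (hx i0)
  have hE0 : 0 < E := by linarith
  -- pieces
  let r : ι → Option (Fin N) → (ι → ℝ) := fun i o =>
    match o with
    | none => fun j => δ i j
    | some t => fun j => c i t * x j ^ (t : ℕ)
  let g : ι → Option (Fin N) → ℝ := fun i o =>
    match o with
    | none => G i
    | some t => |c i t| * (E * X) ^ (t : ℕ)
  let wt : Option (Fin N) → ℕ := fun o =>
    match o with
    | none => N
    | some t => t
  have hr : ∀ i o j, |r i o j| * E ^ wt o ≤ g i o := by
    intro i o j
    cases o with
    | none => exact hδ i j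
    | some t =>
      simp only [r, wt, g, abs_mul, abs_pow, mul_pow]
      have : |x j| ^ (t:ℕ) ≤ X ^ (t:ℕ) := pow_le_pow_left₀ (abs_nonneg _) (hx j) _
      have h1 : 0 ≤ |c i t| * E ^ (t:ℕ) := by positivity
      nlinarith [mul_le_mul_of_nonneg_left this h1]
  have hg0 : ∀ i o, 0 ≤ g i o := fun i o => le_trans (by positivity) (hr i o i0)
  have hsum : ∀ i, ∑ o, g i o ≤ 2 * G i := by
    intro i
    rw [Fintype.sum_option]
    have := hc i
    simp only [g]
    linarith
  have hAr : A = Matrix.of (fun i => ∑ o, r i o) := by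
    ext i j
    rw [Matrix.of_apply, Finset.sum_apply, Fintype.sum_option, hA]
    simp only [r]; ring
  have hdet : A.det = ∑ f : ι → Option (Fin N), Matrix.det (Matrix.of fun i => r i (f i)) := by
    have := (Matrix.detRowAlternating (n := ι) (R := ℝ)).toMultilinearMap.map_sum (fun i o => r i o)
    rw [hAr]
    exact this
  have hterm : ∀ f : ι → Option (Fin N),
      |Matrix.det (Matrix.of fun i => r i (f i))| * E ^ (N * (N - 1) / 2) ≤ N.factorial * ∏ i, g i (f i) := by
    intro f
    by_cases hinj : ∀ i i' t, f i = some t → f i' = some t → i = i'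
    · -- weights
      have hw : N * (N - 1) / 2 ≤ ∑ i, wt (f i) := by
        let S := Finset.univ.filter (fun i => f i ≠ none)
        let T : Finset ℕ := S.image (fun i => wt (f i))
        have hinjOn : Set.InjOn (fun i => wt (f i)) (S : Set ι) := by
          intro i hi i' hi' h
          simp only [S, Finset.coe_filter, Finset.mem_univ, true_and, Set.mem_ofPred_eq] at hi hi'
          obtain ⟨t, ht⟩ := Option.ne_none_iff_exists'.mp hi
          obtain ⟨t', ht'⟩ := Option.ne_none_iff_exists'.mp hi'
          simp only [ht, ht', wt] at h
          have : t = t' := Fin.ext h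
          subst this
          exact hinj i i' t ht ht'
        have hTsub : T ⊆ Finset.range N := by
          intro a ha
          simp only [T, Finset.mem_image] at ha
          obtain ⟨i, hi, rfl⟩ := ha
          simp only [S, Finset.mem_filter, Finset.mem_univ, true_and] at hi
          obtain ⟨t, ht⟩ := Option.ne_none_iff_exists'.mp hi
          simp [ht, wt]
        have hTc : T.card = S.card := Finset.card_image_of_injOn hinjOn
        have hTs : ∑ a ∈ T, a = ∑ i ∈ S, wt (f i) := Finset.sum_image hinjOn
        have h1 := Finset.sum_sdiff hTsub (f := fun a => a)
        have h2 : ∑ a ∈ Finset.range N \ T, a ≤ (Finset.range N \ T).card * N := by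
          rw [← smul_eq_mul]
          apply Finset.sum_le_card_nsmul
          intro a ha
          simp at ha; omega
        have h3 : (Finset.range N \ T).card = N - S.card := by
          rw [Finset.card_sdiff_of_subset hTsub, hTc, Finset.card_range]
        have h4 : ∑ i, wt (f i) = ∑ i ∈ S, wt (f i) + ∑ i ∈ Sᶜ, wt (f i) :=
          (Finset.sum_add_sum_compl S _).symm
        have h5 : ∑ i ∈ Sᶜ, wt (f i) = Sᶜ.card * N := by
          rw [← smul_eq_mul, ← Finset.sum_const]
          apply Finset.sum_congr rfl
          intro i hi
          simp only [S, Finset.mem_compl, Finset.mem_filter, Finset.mem_univ, true_and, not_not] at hi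
          simp [hi, wt]
        rw [Finset.card_compl, hN] at h5
        rw [h3] at h2
        rw [Finset.sum_range_id] at h1
        omega
      have hE1 : E ^ (N * (N - 1) / 2) ≤ ∏ i, E ^ wt (f i) := by
        rw [Finset.prod_pow_eq_pow_sum]
        exact pow_le_pow_right₀ hE hw
      have hd : |Matrix.det (Matrix.of fun i => r i (f i))| ≤ N.factorial * ∏ i, (g i (f i) / E ^ wt (f i)) := by
        simp only [Matrix.det_apply, Matrix.of_apply]
        refine (Finset.abs_sum_le_sum_abs _ _).trans ?_
        have : ∀ σ ∈ (Finset.univ : Finset (Equiv.Perm ι)),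
            |(Equiv.Perm.sign σ) • ∏ i, r (σ i) (f (σ i)) i| ≤ ∏ i, (g i (f i) / E ^ wt (f i)) := by
          intro σ _
          have e1 : |(Equiv.Perm.sign σ) • ∏ i, r (σ i) (f (σ i)) i| = ∏ i, |r (σ i) (f (σ i)) i| := by
            rw [← Finset.abs_prod]
            rcases Int.units_eq_one_or (Equiv.Perm.sign σ) with h | h <;> simp [h]
          rw [e1, ← Equiv.prod_comp σ (fun i => g i (f i) / E ^ wt (f i))]
          apply Finset.prod_le_prod
          · intros; positivity
          · intro i _
            rw [le_div_iff₀ (by positivity)]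
            exact hr _ _ _
        refine (Finset.sum_le_card_nsmul _ _ _ this).trans ?_
        rw [Finset.card_univ, Fintype.card_perm, hN, nsmul_eq_mul]
      calc _ ≤ (N.factorial * ∏ i, (g i (f i) / E ^ wt (f i))) * ∏ i, E ^ wt (f i) := by
            gcongr
            exact mul_nonneg (by positivity) (Finset.prod_nonneg fun i _ => div_nonneg (hg0 _ _) (by positivity))
        _ = N.factorial * ∏ i, g i (f i) := by
            rw [mul_assoc, ← Finset.prod_mul_distrib]
            congr 1
            apply Finset.prod_congr rfl
            intro i _
            field_simp
    · push Not at hinj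
      obtain ⟨i, i', t, h1, h2, hne⟩ := hinj
      have : Matrix.det (Matrix.of fun i => r i (f i)) = 0 := by
        rw [← Matrix.exists_vecMul_eq_zero_iff]
        by_cases hci : c i t = 0
        · refine ⟨Pi.single i 1, by simp, ?_⟩
          ext j
          simp [Matrix.vecMul, dotProduct, Pi.single_apply, h1, r, hci]
        · refine ⟨Pi.single i (c i' t) - Pi.single i' (c i t), ?_, ?_⟩
          · intro h
            have := congrFun h i'
            simp [Pi.single_apply, hne.symm] at this
            exact hci this
          · ext j
            simp [Matrix.vecMul, dotProduct, Pi.single_apply, sub_mul, Finset.sum_sub_distrib, h1, h2, r]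
            ring
      rw [this]
      simp only [abs_zero, zero_mul]
      exact mul_nonneg (by positivity) (Finset.prod_nonneg fun i _ => hg0 _ _)
  calc |A.det| * E ^ (N * (N - 1) / 2)
      ≤ (∑ f : ι → Option (Fin N), |Matrix.det (Matrix.of fun i => r i (f i))|) * E ^ (N * (N - 1) / 2) := by
        rw [hdet]; gcongr; exact Finset.abs_sum_le_sum_abs _ _
    _ ≤ ∑ f : ι → Option (Fin N), N.factorial * ∏ i, g i (f i) := by
        rw [Finset.sum_mul]; exact Finset.sum_le_sum fun f _ => hterm f
    _ = N.factorial * ∏ i, ∑ o, g i o := by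
        rw [← Finset.mul_sum, Finset.prod_univ_sum]; simp
    _ ≤ _ := by
        gcongr with i
        · exact fun i _ => Finset.sum_nonneg fun o _ => hg0 _ _
        · exact hsum i

open Polynomial in
theorem zero_lemma (K L R2 S q : ℕ) (A1 A2 : ℝ) (hA1 : 0 < A1) (hA1' : A1 ≠ 1) (hA2 : 0 < A2)
    (hL : 1 ≤ L) (hK : 1 ≤ K) (hq : R2 ≤ q) (hcard : K * L ≤ R2 * S) (p : Fin K → Fin L → ℝ)
    (hv : ∀ r < R2 + L, ∀ s < S, ∑ l : Fin L, ∑ i : Fin K,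
      p i l * ((r : ℝ) + q * s) ^ (i : ℕ) * (A1 ^ r * A2 ^ s) ^ (l : ℕ) = 0) : p = 0 := by
  classical
  let P : Fin L → ℝ[X] := fun l => ∑ i : Fin K, C (p i l) * X ^ (i : ℕ)
  have hPev : ∀ l x, (P l).eval x = ∑ i : Fin K, p i l * x ^ (i : ℕ) := by
    intro l x; simp [P, eval_finsetSum]
  have hPdeg : ∀ l, (P l).natDegree ≤ K - 1 := by
    intro l
    apply natDegree_sum_le_of_forall_le
    intro i _
    refine (natDegree_C_mul_X_pow_le _ _).trans ?_
    omega
  have hPc : ∀ l (i : Fin K), (P l).coeff i = p i l := by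
    intro l i
    simp only [P, finsetSum_coeff, coeff_C_mul, coeff_X_pow]
    simp [Fin.val_inj]
  by_contra hp
  let I := {l : Fin L // P l ≠ 0}
  have hne : Nonempty I := by
    by_contra h
    rw [nonempty_subtype] at h
    push Not at h
    apply hp
    ext i l
    rw [← hPc l i, h l]; simp
  have hIc : Fintype.card I ≤ L := by
    exact (Fintype.card_subtype_le (fun l : Fin L => P l ≠ 0)).trans (by rw [Fintype.card_fin])
  set L' := Fintype.card I with hL'
  let e : Fin L' ≃ I := (Fintype.equivFin I).symm
  let ℓ : Fin L' → ℕ := fun a => ((e a).1 : ℕ)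
  let Pe : Fin L' → ℝ[X] := fun a => P (e a).1
  have hPe : ∀ a, Pe a ≠ 0 := fun a => (e a).2
  let M : Matrix (Fin L') (Fin L') ℝ[X] :=
    Matrix.of fun j a => C (A1 ^ ((j : ℕ) * ℓ a)) * taylor ((j : ℕ) : ℝ) (Pe a)
  let T := ∑ a, (Pe a).natDegree
  have hMne : ∀ j a, M j a ≠ 0 := by
    intro j a
    simp only [M, Matrix.of_apply]
    refine mul_ne_zero (by rw [Ne, C_eq_zero]; exact (pow_pos hA1 _).ne') ?_
    rw [Ne, taylor_eq_zero]; exact hPe a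
  have hMdeg : ∀ j a, (M j a).natDegree = (Pe a).natDegree := by
    intro j a
    simp only [M, Matrix.of_apply]
    rw [natDegree_C_mul (by positivity), natDegree_taylor]
  have hMlead : ∀ j a, (M j a).leadingCoeff = (Pe a).leadingCoeff * A1 ^ ((j : ℕ) * ℓ a) := by
    intro j a
    simp only [M, Matrix.of_apply]
    rw [leadingCoeff_mul, leadingCoeff_C, leadingCoeff_taylor, mul_comm]
  have hprodDeg : ∀ σ : Equiv.Perm (Fin L'), (∏ a, M (σ a) a).natDegree = T := by
    intro σ
    rw [natDegree_prod _ _ (fun a _ => hMne _ _)]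
    exact Finset.sum_congr rfl fun a _ => hMdeg _ _
  have hprodLead : ∀ σ : Equiv.Perm (Fin L'), (∏ a, M (σ a) a).coeff T =
      ∏ a, (Pe a).leadingCoeff * A1 ^ ((σ a : ℕ) * ℓ a) := by
    intro σ
    rw [← hprodDeg σ, coeff_natDegree, leadingCoeff_prod]
    exact Finset.prod_congr rfl fun a _ => hMlead _ _
  have hcoeff : M.det.coeff T = (Matrix.of fun (j a : Fin L') => (Pe a).leadingCoeff *
      (Matrix.of fun (j a : Fin L') => A1 ^ ((j : ℕ) * ℓ a)) j a).det := by
    rw [Matrix.det_apply, Matrix.det_apply, finsetSum_coeff]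
    apply Finset.sum_congr rfl
    intro σ _
    have h1 := hprodLead σ
    simp only [Matrix.of_apply]
    rcases Int.units_eq_one_or (Equiv.Perm.sign σ) with h | h
    · rw [h]; simpa using h1
    · rw [h]; simpa using h1
  have hDne : M.det ≠ 0 := by
    intro h0
    rw [h0, coeff_zero, Matrix.det_mul_row] at hcoeff
    have h2 : (∏ i, (Pe i).leadingCoeff) ≠ 0 :=
      Finset.prod_ne_zero_iff.mpr fun a _ => leadingCoeff_ne_zero.mpr (hPe a)
    have h3 : (Matrix.of fun (j a : Fin L') => A1 ^ ((j : ℕ) * ℓ a)) =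
        (Matrix.vandermonde (fun a => A1 ^ ℓ a)).transpose := by
      ext j a
      simp [Matrix.vandermonde_apply, ← pow_mul, mul_comm]
    rw [h3, Matrix.det_transpose] at hcoeff
    have h4 : (Matrix.vandermonde (fun a => A1 ^ ℓ a)).det ≠ 0 := by
      rw [Matrix.det_vandermonde_ne_zero_iff]
      intro a b hab
      have : ℓ a = ℓ b := pow_right_injective₀ hA1 hA1' hab
      exact e.injective (Subtype.ext (Fin.ext this))
    exact mul_ne_zero h2 h4 hcoeff.symm
  have hDdeg : M.det.natDegree ≤ T := by
    rw [Matrix.det_apply]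
    apply natDegree_sum_le_of_forall_le
    intro σ _
    rcases Int.units_eq_one_or (Equiv.Perm.sign σ) with h | h
    · rw [h, one_smul, hprodDeg]
    · rw [h]; simp only [Units.neg_smul, one_smul, natDegree_neg]; rw [hprodDeg]
  have hT : T ≤ L' * (K - 1) := by
    have := Finset.sum_le_card_nsmul (Finset.univ : Finset (Fin L')) (fun a => (Pe a).natDegree) (K - 1)
      (fun a _ => hPdeg _)
    simpa using this
  apply hDne
  refine eq_zero_of_natDegree_lt_card_of_eval_eq_zero M.det
    (f := fun (x : Fin R2 × Fin S) => ((x.1 : ℕ) : ℝ) + q * ((x.2 : ℕ) : ℝ)) ?_ ?_ ?_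
  · rintro ⟨r, s⟩ ⟨r', s'⟩ h
    have h' : (r : ℕ) + q * s = r' + q * s' := by
      simp only at h
      exact_mod_cast h
    have hr := r.2; have hr' := r'.2
    have hq0 : 0 < q := by omega
    have e1 : ((r : ℕ) + q * s) / q = s := by
      rw [Nat.add_mul_div_left _ _ hq0, Nat.div_eq_of_lt (by omega)]; simp
    have e2 : ((r' : ℕ) + q * s') / q = s' := by
      rw [Nat.add_mul_div_left _ _ hq0, Nat.div_eq_of_lt (by omega)]; simp
    have hs : (s : ℕ) = s' := by rw [← e1, ← e2, h']
    have hr2 : (r : ℕ) = r' := by rw [hs] at h'; omega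
    ext
    · exact hr2
    · exact hs
  · rintro ⟨r, s⟩
    have hmap : M.det.eval (((r : ℕ) : ℝ) + q * ((s : ℕ) : ℝ)) =
      (M.map (eval (((r : ℕ) : ℝ) + q * ((s : ℕ) : ℝ)))).det := by
      have := (evalRingHom (((r : ℕ) : ℝ) + q * ((s : ℕ) : ℝ))).map_det M
      simpa using this
    simp only
    rw [hmap, ← Matrix.exists_mulVec_eq_zero_iff]
    refine ⟨fun a => (A1 ^ (r : ℕ) * A2 ^ (s : ℕ)) ^ ℓ a, ?_, ?_⟩
    · intro h
      obtain ⟨i⟩ := hne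
      have := congrFun h (e.symm i)
      simp only [Pi.zero_apply] at this
      have hpos : 0 < (A1 ^ (r : ℕ) * A2 ^ (s : ℕ)) ^ ℓ (e.symm i) := by positivity
      exact hpos.ne' this
    · ext j
      have hjr : (r : ℕ) + j < R2 + L := by have := r.2; have := j.2; omega
      have h0 := hv _ hjr s s.2
      rw [Pi.zero_apply, ← h0]
      simp only [Matrix.mulVec, dotProduct, Matrix.map_apply, M, Matrix.of_apply, eval_mul, eval_C,
        taylor_eval]
      have hs1 : ∀ l : Fin L, ∑ i : Fin K, p i l * ((((r : ℕ) + (j : ℕ) : ℕ) : ℝ) + q * ((s : ℕ) : ℝ)) ^ (i : ℕ) *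
          (A1 ^ ((r : ℕ) + j) * A2 ^ (s : ℕ)) ^ (l : ℕ) =
          (P l).eval ((((r : ℕ) : ℝ) + q * ((s : ℕ) : ℝ)) + (j : ℕ)) *
            (A1 ^ ((r : ℕ) + j) * A2 ^ (s : ℕ)) ^ (l : ℕ) := by
        intro l
        rw [hPev, Finset.sum_mul]
        push_cast
        simp only [add_right_comm]
      simp only [hs1]
      rw [← Finset.sum_subset (Finset.subset_univ (Finset.univ.filter fun l => P l ≠ 0))]
      · rw [← Finset.sum_subtype_of_mem (p := fun l => P l ≠ 0) (f := fun l => (P l).eval ((((r : ℕ) : ℝ) + q * ((s : ℕ) : ℝ)) + (j : ℕ)) *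
            (A1 ^ ((r : ℕ) + j) * A2 ^ (s : ℕ)) ^ (l : ℕ)) (by simp)]
        rw [show (Finset.subtype (fun l => P l ≠ 0) (Finset.univ.filter fun l => P l ≠ 0)) = Finset.univ by ext z; simpa using z.2]
        rw [← Equiv.sum_comp e]
        apply Finset.sum_congr rfl
        intro a _
        simp only [Pe, ℓ]
        rw [pow_add, pow_mul]
        ring
      · intro l _ hl
        simp only [Finset.mem_filter, Finset.mem_univ, true_and, not_not] at hl
        simp [hl]
  · simp only [Fintype.card_prod, Fintype.card_fin]
    have h1 : L' * (K - 1) ≤ L * (K - 1) := Nat.mul_le_mul_right _ hIc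
    have h2 : L * (K - 1) < K * L := by
      rw [mul_comm K L]
      exact Nat.mul_lt_mul_of_pos_left (by omega) (by omega)
    omega

theorem minor_exists {P F : Type} [Fintype P] [Fintype F] [DecidableEq P] [DecidableEq F] (A : Matrix P F ℝ)
    (h : ∀ v, A.mulVec v = 0 → v = 0) : ∃ f : F → P, (A.submatrix f id).det ≠ 0 := by
  have hspan : Submodule.span ℝ (Set.range A.row) = ⊤ := by
    apply Submodule.eq_top_of_finrank_eq
    rw [← Matrix.rank_eq_finrank_span_row, Module.finrank_fintype_fun_eq_card]
    rw [Matrix.rank, LinearMap.finrank_range_of_inj, Module.finrank_fintype_fun_eq_card]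
    rw [← LinearMap.ker_eq_bot, LinearMap.ker_eq_bot']
    intro v hv
    exact h v (by simpa using hv)
  obtain ⟨b, hb1, hb2, hb3⟩ := exists_linearIndependent ℝ (Set.range A.row)
  rw [hspan] at hb2
  let B := Module.Basis.mk hb3 (by simpa using hb2.ge)
  have : Finite b := Module.Finite.finite_basis B
  have : Fintype b := Fintype.ofFinite b
  have hc : Fintype.card F = Fintype.card b := by
    rw [← Module.finrank_eq_card_basis B, Module.finrank_fintype_fun_eq_card]
  let e : F ≃ b := Fintype.equivOfCardEq hc
  have hch : ∀ x : F, ∃ y : P, A.row y = (e x : F → ℝ) := fun x => hb1 (e x).2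
  choose f hf using hch
  refine ⟨f, ?_⟩
  have hli : LinearIndependent ℝ (A.submatrix f id).row := by
    have : (A.submatrix f id).row = (fun x : b => (x : F → ℝ)) ∘ e := by
      ext x y
      exact congrFun (hf x) y
    rw [this]
    exact hb3.comp _ e.injective
  rw [Matrix.linearIndependent_rows_iff_isUnit, Matrix.isUnit_iff_isUnit_det] at hli
  exact hli.ne_zero

theorem exists_plastic : ∃ x : ℝ, 1.3247 < x ∧ x < 1.3248 ∧ x ^ 3 = x + 1 := by
  have h := intermediate_value_Icc (a := (1.3247:ℝ)) (b := 1.3248) (by norm_num)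
    (f := fun x => x ^ 3 - x - 1) (by fun_prop)
  have h0 : (0:ℝ) ∈ Set.Icc ((1.3247:ℝ) ^ 3 - 1.3247 - 1) ((1.3248:ℝ) ^ 3 - 1.3248 - 1) := by
    constructor <;> norm_num
  obtain ⟨x, ⟨h1, h2⟩, h3⟩ := h h0
  simp only at h3
  refine ⟨x, lt_of_le_of_ne h1 ?_, lt_of_le_of_ne h2 ?_, by linarith⟩
  · rintro rfl; norm_num at h3
  · rintro rfl; norm_num at h3

/-- The plastic number. -/
noncomputable def plast : ℝ := Classical.choose exists_plastic
theorem plast_lo : 1.3247 < plast := (Classical.choose_spec exists_plastic).1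
theorem plast_hi : plast < 1.3248 := (Classical.choose_spec exists_plastic).2.1
theorem plast_eq : plast ^ 3 = plast + 1 := (Classical.choose_spec exists_plastic).2.2
theorem plast_pos : 0 < plast := by linarith [plast_lo]

open Real in
theorem gold_lo : 1.618 < goldenRatio := by
  have : (2.236:ℝ) < √5 := by apply Real.lt_sqrt_of_sq_lt; norm_num
  unfold goldenRatio; linarith
open Real in
theorem gold_hi : goldenRatio < 1.6181 := by
  have : √5 < (2.2362:ℝ) := by rw [Real.sqrt_lt' (by norm_num)]; norm_num
  unfold goldenRatio; linarith

/-- The number field generated by the golden ratio and the plastic number. -/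
noncomputable def KK : IntermediateField ℚ ℝ :=
  IntermediateField.adjoin ℚ {Real.goldenRatio} ⊔ IntermediateField.adjoin ℚ {plast}

theorem gold_mem : Real.goldenRatio ∈ KK :=
  (le_sup_left : _ ≤ KK) (IntermediateField.mem_adjoin_simple_self ℚ _)
theorem plast_mem : plast ∈ KK :=
  (le_sup_right : _ ≤ KK) (IntermediateField.mem_adjoin_simple_self ℚ _)

open Polynomial in
theorem gold_int : IsIntegral ℤ Real.goldenRatio := by
  refine ⟨X ^ 2 - X - 1, by monicity!, ?_⟩
  simp [Real.goldenRatio_sq]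
open Polynomial in
theorem plast_int : IsIntegral ℤ plast := by
  refine ⟨X ^ 3 - X - 1, by monicity!, ?_⟩
  simp [plast_eq]

open Polynomial in
theorem finrank_KK : Module.finrank ℚ KK ≤ 6 ∧ FiniteDimensional ℚ KK := by
  have hg : IsIntegral ℚ Real.goldenRatio := gold_int.tower_top
  have hp : IsIntegral ℚ plast := plast_int.tower_top
  have f1 : FiniteDimensional ℚ (IntermediateField.adjoin ℚ {Real.goldenRatio}) :=
    IntermediateField.adjoin.finiteDimensional hg
  have f2 : FiniteDimensional ℚ (IntermediateField.adjoin ℚ {plast}) :=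
    IntermediateField.adjoin.finiteDimensional hp
  have d1 : Module.finrank ℚ (IntermediateField.adjoin ℚ {Real.goldenRatio}) ≤ 2 := by
    rw [IntermediateField.adjoin.finrank hg]
    have hm : (X ^ 2 - X - 1 : ℚ[X]).Monic := by monicity!
    have := natDegree_le_natDegree (minpoly.min ℚ Real.goldenRatio hm (by simp [Real.goldenRatio_sq]))
    refine this.trans (by compute_degree)
  have d2 : Module.finrank ℚ (IntermediateField.adjoin ℚ {plast}) ≤ 3 := by
    rw [IntermediateField.adjoin.finrank hp]
    have hm : (X ^ 3 - X - 1 : ℚ[X]).Monic := by monicity!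
    have := natDegree_le_natDegree (minpoly.min ℚ plast hm (by simp [plast_eq]))
    refine this.trans (by compute_degree)
  constructor
  · have := IntermediateField.finrank_sup_le (IntermediateField.adjoin ℚ {Real.goldenRatio})
      (IntermediateField.adjoin ℚ {plast})
    exact this.trans (by nlinarith)
  · exact IntermediateField.finiteDimensional_sup _ _

instance : FiniteDimensional ℚ KK := finrank_KK.2

theorem liouville_KK (z : KK) (hz : IsIntegral ℤ z) (hz0 : z ≠ 0) (M : ℝ) (hM : 1 ≤ M)
    (h : ∀ σ : KK →ₐ[ℚ] ℂ, ‖σ z‖ ≤ M) : 1 ≤ |(z : ℝ)| * M ^ 5 := by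
  classical
  have hn := Algebra.norm_eq_prod_embeddings ℚ ℂ z
  have hni : IsIntegral ℤ (Algebra.norm ℚ z) := Algebra.isIntegral_norm ℚ hz
  obtain ⟨k, hk⟩ := IsIntegrallyClosed.isIntegral_iff.mp hni
  have hn0 : Algebra.norm ℚ z ≠ 0 := Algebra.norm_ne_zero_iff.mpr hz0
  have hk0 : k ≠ 0 := by rintro rfl; apply hn0; rw [← hk]; simp
  have h1 : (1:ℝ) ≤ ‖∏ σ : KK →ₐ[ℚ] ℂ, σ z‖ := by
    rw [← hn, ← hk]
    have : (1:ℝ) ≤ |(k:ℝ)| := by exact_mod_cast Int.one_le_abs hk0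
    simpa using this
  let σ0 : KK →ₐ[ℚ] ℂ := ((Algebra.ofId ℝ ℂ).restrictScalars ℚ).comp KK.val
  have hσ0 : ‖σ0 z‖ = |(z : ℝ)| := by
    have e : σ0 z = ((z : ℝ) : ℂ) := rfl
    rw [e, Complex.norm_real, Real.norm_eq_abs]
  rw [norm_prod, ← Finset.mul_prod_erase _ _ (Finset.mem_univ σ0), hσ0] at h1
  refine h1.trans ?_
  gcongr
  have hb : ∏ σ ∈ Finset.univ.erase σ0, ‖σ z‖ ≤ M ^ (Finset.univ.erase σ0).card :=
    (Finset.prod_le_prod (fun σ _ => norm_nonneg _) (fun σ _ => h σ)).trans (by rw [Finset.prod_const])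
  refine hb.trans (pow_le_pow_right₀ hM ?_)
  rw [Finset.card_erase_of_mem (Finset.mem_univ _), Finset.card_univ, AlgHom.card]
  have := finrank_KK.1
  omega

theorem exp_half_lo : (1.64:ℝ) < Real.exp (1/2) := by
  have h : (1.64:ℝ)^2 < Real.exp (1/2) ^ 2 := by
    rw [← Real.exp_nat_mul]
    have := Real.exp_one_gt_d9
    norm_num at *
    linarith
  exact lt_of_pow_lt_pow_left₀ 2 (Real.exp_pos _).le h

theorem conj_bound (z : ℂ) (h : z ^ 2 = z + 1 ∨ z ^ 3 = z + 1) :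
    ‖z‖ ≤ Real.exp (1/2) ∧ ‖z⁻¹‖ ≤ Real.exp (1/2) := by
  have he := exp_half_lo
  have hz : z ≠ 0 := by rintro rfl; rcases h with h | h <;> norm_num at h
  have hw : z * z⁻¹ = 1 := mul_inv_cancel₀ hz
  have n0 := norm_nonneg z
  have m0 := norm_nonneg z⁻¹
  suffices ‖z‖ ≤ 1.64 ∧ ‖z⁻¹‖ ≤ 1.64 from ⟨by linarith [this.1], by linarith [this.2]⟩
  rcases h with h | h
  · have h1 : ‖z‖ ^ 2 ≤ ‖z‖ + 1 := by
      rw [← norm_pow, h]; exact (norm_add_le _ _).trans (by simp)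
    have e2 : (z⁻¹) ^ 2 = 1 - z⁻¹ := by
      field_simp; linear_combination -h
    have h2 : ‖z⁻¹‖ ^ 2 ≤ 1 + ‖z⁻¹‖ := by
      rw [← norm_pow, e2]; exact (norm_sub_le _ _).trans (by simp)
    constructor <;> nlinarith
  · have h1 : ‖z‖ ^ 3 ≤ ‖z‖ + 1 := by
      rw [← norm_pow, h]; exact (norm_add_le _ _).trans (by simp)
    have e2 : (z⁻¹) ^ 3 = 1 - (z⁻¹) ^ 2 := by
      field_simp; linear_combination -h
    have h2 : ‖z⁻¹‖ ^ 3 ≤ 1 + ‖z⁻¹‖ ^ 2 := by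
      rw [← norm_pow, e2]; exact (norm_sub_le _ _).trans (by simp)
    constructor
    · by_contra hc; push Not at hc
      nlinarith [mul_self_nonneg (‖z‖ - 1.64), mul_pos (by linarith : (0:ℝ) < ‖z‖) (sub_pos.2 hc)]
    · by_contra hc; push Not at hc
      nlinarith [mul_self_nonneg (‖z⁻¹‖ - 1.64), mul_pos (by linarith : (0:ℝ) < ‖z⁻¹‖) (sub_pos.2 hc), sq_nonneg ‖z⁻¹‖]

/-- Golden ratio in KK. -/
noncomputable def gK : KK := ⟨Real.goldenRatio, gold_mem⟩
/-- Plastic number in KK. -/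
noncomputable def pK : KK := ⟨plast, plast_mem⟩
theorem gK_sq : gK ^ 2 = gK + 1 := by
  apply Subtype.ext; simp [gK, Real.goldenRatio_sq]
theorem pK_cub : pK ^ 3 = pK + 1 := by
  apply Subtype.ext; simp [pK, plast_eq]
theorem gK_ne : gK ≠ 0 := by
  intro h; have := gK_sq; rw [h] at this; norm_num at this
theorem pK_ne : pK ≠ 0 := by
  intro h; have := pK_cub; rw [h] at this; norm_num at this

theorem gK_bound (σ : KK →ₐ[ℚ] ℂ) : ‖σ gK‖ ≤ Real.exp (1/2) ∧ ‖σ gK⁻¹‖ ≤ Real.exp (1/2) := by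
  have := conj_bound (σ gK) (Or.inl (by rw [← map_pow, gK_sq, map_add, map_one]))
  rwa [← map_inv₀] at this
theorem pK_bound (σ : KK →ₐ[ℚ] ℂ) : ‖σ pK‖ ≤ Real.exp (1/2) ∧ ‖σ pK⁻¹‖ ≤ Real.exp (1/2) := by
  have := conj_bound (σ pK) (Or.inr (by rw [← map_pow, pK_cub, map_add, map_one]))
  rwa [← map_inv₀] at this

theorem isInt_of_coe (z : KK) (h : IsIntegral ℤ (z : ℝ)) : IsIntegral ℤ z := by
  have := (isIntegral_algHom_iff (KK.val.restrictScalars ℤ) Subtype.val_injective (x := z)).mp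
  exact this h
theorem gK_int : IsIntegral ℤ gK := isInt_of_coe _ gold_int
theorem pK_int : IsIntegral ℤ pK := isInt_of_coe _ plast_int
theorem gK_inv : gK⁻¹ = gK - 1 := by
  have := gK_ne
  field_simp; linear_combination -gK_sq
theorem pK_inv : pK⁻¹ = pK ^ 2 - 1 := by
  have := pK_ne
  field_simp; linear_combination -pK_cub
theorem gK_inv_int : IsIntegral ℤ gK⁻¹ := by rw [gK_inv]; exact gK_int.sub isIntegral_one
theorem pK_inv_int : IsIntegral ℤ pK⁻¹ := by rw [pK_inv]; exact (pK_int.pow 2).sub isIntegral_one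

theorem zpow_norm_bound (z : ℂ) (e : ℝ) (h1 : ‖z‖ ≤ Real.exp e) (h2 : ‖z⁻¹‖ ≤ Real.exp e) (v : ℤ) :
    ‖z ^ v‖ ≤ Real.exp (e * |(v:ℝ)|) := by
  obtain ⟨k, rfl | rfl⟩ := v.eq_nat_or_neg
  · rw [zpow_natCast, norm_pow]
    refine (pow_le_pow_left₀ (norm_nonneg _) h1 _).trans ?_
    rw [← Real.exp_nat_mul]; simp [mul_comm]
  · rw [zpow_neg, zpow_natCast, ← inv_pow, norm_pow]
    refine (pow_le_pow_left₀ (norm_nonneg _) h2 _).trans ?_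
    rw [← Real.exp_nat_mul]; simp [mul_comm]

theorem zpow_int (z : KK) (h1 : IsIntegral ℤ z) (h2 : IsIntegral ℤ z⁻¹) (v : ℤ) : IsIntegral ℤ (z ^ v) := by
  obtain ⟨k, rfl | rfl⟩ := v.eq_nat_or_neg
  · rw [zpow_natCast]; exact h1.pow _
  · rw [zpow_neg, zpow_natCast, ← inv_pow]; exact h2.pow _

open Polynomial in
theorem mult_indep (k : ℕ) (hk : 1 ≤ k) (l : ℤ) : Real.goldenRatio ^ k ≠ plast ^ l := by
  intro h
  have hg : IsIntegral ℚ Real.goldenRatio := gold_int.tower_top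
  have hp : IsIntegral ℚ plast := plast_int.tower_top
  have d2 : Module.finrank ℚ (IntermediateField.adjoin ℚ {plast}) = 3 := by
    rw [IntermediateField.adjoin.finrank hp]
    have hm : (X ^ 3 - X - 1 : ℚ[X]).Monic := by monicity!
    rw [← minpoly.eq_of_irreducible_of_monic (X_pow_sub_X_sub_one_irreducible_rat (by norm_num))
      (by simp [plast_eq]) hm]
    compute_degree!
  have d1 : Module.finrank ℚ (IntermediateField.adjoin ℚ {Real.goldenRatio}) = 2 := by
    rw [IntermediateField.adjoin.finrank hg]
    have hm : (X ^ 2 - X - 1 : ℚ[X]).Monic := by monicity!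
    have h1 := natDegree_le_natDegree (minpoly.min ℚ Real.goldenRatio hm (by simp [Real.goldenRatio_sq]))
    have h2 : (X ^ 2 - X - 1 : ℚ[X]).natDegree = 2 := by compute_degree!
    have h3 : 2 ≤ (minpoly ℚ Real.goldenRatio).natDegree := by
      rw [minpoly.two_le_natDegree_iff hg]
      rintro ⟨x, hx⟩
      exact Real.goldenRatio_irrational ⟨x, by simpa using hx⟩
    omega
  have hmem : Real.goldenRatio ∈ IntermediateField.adjoin ℚ {plast} := by
    obtain ⟨j, rfl⟩ : ∃ j, k = j + 1 := ⟨k - 1, by omega⟩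
    have h1 := Real.goldenRatio_mul_fib_succ_add_fib j
    have hf : (Nat.fib (j+1) : ℝ) ≠ 0 := by
      have := Nat.fib_pos.mpr (Nat.succ_pos j); positivity
    have h2 : Real.goldenRatio = (plast ^ l - Nat.fib j) / Nat.fib (j+1) := by
      rw [eq_div_iff hf, ← h]; linarith
    rw [h2]
    apply div_mem
    · apply sub_mem
      · exact zpow_mem (IntermediateField.mem_adjoin_simple_self ℚ _) _
      · exact natCast_mem _ _
    · exact natCast_mem _ _
  have hle : IntermediateField.adjoin ℚ {Real.goldenRatio} ≤ IntermediateField.adjoin ℚ {plast} := by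
    rw [IntermediateField.adjoin_simple_le_iff]; exact hmem
  have := IntermediateField.finrank_dvd_of_le_right hle
  rw [d1, d2] at this
  norm_num at this

theorem exp_tail (E y : ℝ) (hE : 1 ≤ E) (m : ℕ) :
    |Real.exp y - ∑ j ∈ Finset.range m, y ^ j / (j.factorial : ℝ)| * E ^ m ≤ Real.exp (E * |y|) := by
  have ht : Filter.Tendsto (fun M => |(∑ j ∈ Finset.range (M + m), y ^ j / (j.factorial : ℝ)) - ∑ j ∈ Finset.range m, y ^ j / (j.factorial : ℝ)| * E ^ m)
      Filter.atTop (nhds (|Real.exp y - ∑ j ∈ Finset.range m, y ^ j / (j.factorial : ℝ)| * E ^ m)) := by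
    have h1 : HasSum (fun j : ℕ => y ^ j / (j.factorial : ℝ)) (Real.exp y) := by
      rw [Real.exp_eq_exp_ℝ]; exact NormedSpace.expSeries_div_hasSum_exp y
    have h2 := (Filter.tendsto_add_atTop_iff_nat m).2 h1.tendsto_sum_nat
    exact ((h2.sub_const _).abs).mul_const _
  refine le_of_tendsto ht (Filter.Eventually.of_forall fun M => ?_)
  rw [add_comm M m, Finset.sum_range_add, add_sub_cancel_left]
  calc |∑ j ∈ Finset.range M, y ^ (m + j) / ((m + j).factorial : ℝ)| * E ^ m
      ≤ (∑ j ∈ Finset.range M, |y| ^ (m + j) / ((m + j).factorial : ℝ)) * E ^ m := by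
        gcongr
        refine (Finset.abs_sum_le_sum_abs _ _).trans (le_of_eq ?_)
        refine Finset.sum_congr rfl fun j _ => ?_
        rw [abs_div, abs_pow, Nat.abs_cast]
    _ ≤ ∑ j ∈ Finset.range M, (E * |y|) ^ (m + j) / ((m + j).factorial : ℝ) := by
        rw [Finset.sum_mul]
        refine Finset.sum_le_sum fun j _ => ?_
        rw [div_mul_eq_mul_div, mul_pow]
        have : E ^ m ≤ E ^ (m + j) := pow_le_pow_right₀ hE (by omega)
        rw [mul_comm (|y| ^ _)]
        gcongr
    _ ≤ ∑ j ∈ Finset.range (m + M), (E * |y|) ^ j / (j.factorial : ℝ) := by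
        rw [Finset.sum_range_add]
        have : 0 ≤ ∑ j ∈ Finset.range m, (E * |y|) ^ j / (j.factorial : ℝ) :=
          Finset.sum_nonneg fun j _ => by positivity
        linarith
    _ ≤ _ := Real.sum_le_exp_of_nonneg (by positivity) _

theorem sum_shift (N i : ℕ) (hi : i ≤ N) (c z : ℝ) :
    ∑ t : Fin N, (if i ≤ (t:ℕ) then c ^ ((t:ℕ) - i) / (((t:ℕ) - i).factorial : ℝ) else 0) * z ^ (t:ℕ) =
      z ^ i * ∑ j ∈ Finset.range (N - i), (c * z) ^ j / (j.factorial : ℝ) := by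
  rw [Fin.sum_univ_eq_sum_range (fun t => (if i ≤ t then c ^ (t - i) / ((t - i).factorial : ℝ) else 0) * z ^ t) N]
  obtain ⟨m, rfl⟩ := Nat.exists_eq_add_of_le hi
  rw [Finset.sum_range_add, Finset.sum_eq_zero, zero_add, Nat.add_sub_cancel_left, Finset.mul_sum]
  · refine Finset.sum_congr rfl fun j _ => ?_
    rw [if_pos (by omega), Nat.add_sub_cancel_left, mul_pow, pow_add]; ring
  · intro t ht
    rw [if_neg (by simpa using ht), zero_mul]

theorem upper_bd (K L : ℕ) (hL : 1 ≤ L) (w Λ E X S : ℝ) (hE : 1 ≤ E) (hX : 1 ≤ X)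
    (x s : Fin K × Fin L → ℝ) (hx : ∀ j, |x j| ≤ X) (hs : ∀ j, |s j| ≤ S)
    (hΛ : 2 * L * S * |Λ| * E ^ (K * L) ≤ 1)
    (T : Matrix (Fin K × Fin L) (Fin K × Fin L) ℝ)
    (hT : ∀ f j, T f j = x j ^ (f.1:ℕ) * Real.exp ((f.2:ℕ) * (w * x j - s j * Λ))) :
    |T.det| * E ^ (K * L * (K * L - 1) / 2) ≤
      ((K * L).factorial : ℝ) * (4 * (E * X) ^ K * Real.exp (L * |w| * E * X)) ^ (K * L) := by
  have hEX : 1 ≤ E * X := by nlinarith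
  have hE0 : 0 < E := by linarith
  have hX0 : 0 < X := by linarith
  have key := det_upper (K * L) (ι := Fin K × Fin L) (by simp) T
    (fun f t => if (f.1:ℕ) ≤ (t:ℕ) then ((f.2:ℕ) * w) ^ ((t:ℕ) - f.1) / (((t:ℕ) - f.1).factorial : ℝ) else 0)
    (fun f j => T f j - x j ^ (f.1:ℕ) * ∑ m ∈ Finset.range (K * L - f.1), ((f.2:ℕ) * w * x j) ^ m / (m.factorial : ℝ))
    x X E (fun f => 2 * ((E * X) ^ K * Real.exp (L * |w| * E * X))) hE ?_ hx ?_ ?_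
  · refine key.trans (le_of_eq ?_)
    rw [Finset.prod_const, Finset.card_univ, Fintype.card_prod, Fintype.card_fin, Fintype.card_fin]
    ring
  · intro f j
    have hi : (f.1:ℕ) ≤ K * L := f.1.2.le.trans (Nat.le_mul_of_pos_right _ hL)
    rw [sum_shift _ _ hi]; ring
  · intro f
    have hi : (f.1:ℕ) ≤ K * L := f.1.2.le.trans (Nat.le_mul_of_pos_right _ hL)
    have h1 := sum_shift (K * L) f.1 hi ((f.2:ℕ) * |w|) (E * X)
    have h2 : ∑ t : Fin (K * L), |(if (f.1:ℕ) ≤ (t:ℕ) then ((f.2:ℕ) * w) ^ ((t:ℕ) - f.1) / (((t:ℕ) - f.1).factorial : ℝ) else 0)| * (E * X) ^ (t:ℕ)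
        = ∑ t : Fin (K * L), (if (f.1:ℕ) ≤ (t:ℕ) then ((f.2:ℕ) * |w|) ^ ((t:ℕ) - f.1) / (((t:ℕ) - f.1).factorial : ℝ) else 0) * (E * X) ^ (t:ℕ) := by
      refine Finset.sum_congr rfl fun t _ => ?_
      split_ifs with h
      · rw [abs_div, abs_pow, abs_mul, Nat.abs_cast, Nat.abs_cast]
      · simp
    rw [h2, h1]
    have h3 := Real.sum_le_exp_of_nonneg (x := (f.2:ℕ) * |w| * (E * X)) (by positivity) (K * L - f.1)
    have h4 : Real.exp ((f.2:ℕ) * |w| * (E * X)) ≤ Real.exp (L * |w| * E * X) := by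
      apply Real.exp_le_exp.2
      have : ((f.2:ℕ):ℝ) ≤ L := by exact_mod_cast f.2.2.le
      rw [mul_assoc (L * |w| : ℝ)]
      gcongr
    have h5 : (E * X) ^ (f.1:ℕ) ≤ (E * X) ^ K := pow_le_pow_right₀ hEX f.1.2.le
    have : (E * X) ^ (f.1:ℕ) * ∑ j ∈ Finset.range (K * L - f.1), ((f.2:ℕ) * |w| * (E * X)) ^ j / (j.factorial : ℝ)
        ≤ (E * X) ^ K * Real.exp (L * |w| * E * X) := by
      gcongr
      exact h3.trans h4
    have h6 : 0 ≤ (E * X) ^ K * Real.exp (L * |w| * E * X) := by positivity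
    linarith
  · intro f j
    have hi : (f.1:ℕ) ≤ K * L := f.1.2.le.trans (Nat.le_mul_of_pos_right _ hL)
    have hl : ((f.2:ℕ):ℝ) ≤ L := by exact_mod_cast f.2.2.le
    have hL0 : (1:ℝ) ≤ L := by exact_mod_cast hL
    set y : ℝ := (f.2:ℕ) * w * x j with hy
    have hyb : E * |y| ≤ L * |w| * E * X := by
      rw [hy, abs_mul, abs_mul, Nat.abs_cast]
      calc E * ((f.2:ℕ) * |w| * |x j|) ≤ E * (L * |w| * X) := by gcongr; exact hx j
        _ = _ := by ring
    have hyb' : |y| ≤ L * |w| * E * X := le_trans (le_mul_of_one_le_left (abs_nonneg _) hE) hyb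
    set SS := ∑ m ∈ Finset.range (K * L - f.1), y ^ m / (m.factorial : ℝ)
    set z : ℝ := -((f.2:ℕ) * s j * Λ) with hz
    have hTe : T f j = x j ^ (f.1:ℕ) * (Real.exp y * Real.exp z) := by
      rw [hT, ← Real.exp_add]; congr 2; rw [hy, hz]; ring
    have hS0 : 0 ≤ S := (abs_nonneg _).trans (hs j)
    have hzb0 : |z| ≤ L * S * |Λ| := by
      rw [hz, abs_neg, abs_mul, abs_mul, Nat.abs_cast]; gcongr; exact hs j
    have hEN : 1 ≤ E ^ (K * L) := one_le_pow₀ hE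
    have hzb : 2 * |z| * E ^ (K * L) ≤ 1 := by
      refine le_trans ?_ hΛ
      calc 2 * |z| * E ^ (K * L) ≤ 2 * (L * S * |Λ|) * E ^ (K * L) := by gcongr
        _ = _ := by ring
    have hz1 : |z| ≤ 1 := by nlinarith [abs_nonneg z]
    have hez := Real.abs_exp_sub_one_le hz1
    have htail := exp_tail E y hE (K * L - f.1)
    have hpow : E ^ (K * L) = E ^ (K * L - f.1) * E ^ (f.1:ℕ) := by rw [← pow_add]; congr 1; omega
    have e1 : T f j - x j ^ (f.1:ℕ) * SS = x j ^ (f.1:ℕ) * (Real.exp y - SS) + x j ^ (f.1:ℕ) * Real.exp y * (Real.exp z - 1) := by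
      rw [hTe]; ring
    have hxp : |x j| ^ (f.1:ℕ) ≤ X ^ (f.1:ℕ) := pow_le_pow_left₀ (abs_nonneg _) (hx j) _
    have hexpy : Real.exp (E * |y|) ≤ Real.exp (L * |w| * E * X) := Real.exp_le_exp.2 hyb
    have hexpy' : Real.exp y ≤ Real.exp (L * |w| * E * X) := Real.exp_le_exp.2 ((le_abs_self y).trans hyb')
    have h5 : (E * X) ^ (f.1:ℕ) ≤ (E * X) ^ K := pow_le_pow_right₀ hEX f.1.2.le
    have h5' : X ^ (f.1:ℕ) ≤ (E * X) ^ K := (pow_le_pow_left₀ hX0.le (by nlinarith) _).trans h5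
    have a1 : |x j ^ (f.1:ℕ) * (Real.exp y - SS)| * E ^ (K * L) ≤ (E * X) ^ K * Real.exp (L * |w| * E * X) := by
      rw [abs_mul, abs_pow, hpow]
      calc |x j| ^ (f.1:ℕ) * |Real.exp y - SS| * (E ^ (K * L - f.1) * E ^ (f.1:ℕ))
          = (|x j| ^ (f.1:ℕ) * E ^ (f.1:ℕ)) * (|Real.exp y - SS| * E ^ (K * L - f.1)) := by ring
        _ ≤ (X ^ (f.1:ℕ) * E ^ (f.1:ℕ)) * Real.exp (E * |y|) := by gcongr
        _ = (E * X) ^ (f.1:ℕ) * Real.exp (E * |y|) := by rw [mul_pow]; ring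
        _ ≤ _ := by gcongr
    have a2 : |x j ^ (f.1:ℕ) * Real.exp y * (Real.exp z - 1)| * E ^ (K * L) ≤ (E * X) ^ K * Real.exp (L * |w| * E * X) := by
      rw [abs_mul, abs_mul, abs_pow, Real.abs_exp]
      calc |x j| ^ (f.1:ℕ) * Real.exp y * |Real.exp z - 1| * E ^ (K * L)
          = |x j| ^ (f.1:ℕ) * Real.exp y * (|Real.exp z - 1| * E ^ (K * L)) := by ring
        _ ≤ X ^ (f.1:ℕ) * Real.exp y * (2 * |z| * E ^ (K * L)) := by gcongr
        _ ≤ X ^ (f.1:ℕ) * Real.exp y * 1 := by gcongr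
        _ = X ^ (f.1:ℕ) * Real.exp y := by ring
        _ ≤ _ := by gcongr
    rw [e1]
    have := abs_add_le (x j ^ (f.1:ℕ) * (Real.exp y - SS)) (x j ^ (f.1:ℕ) * Real.exp y * (Real.exp z - 1))
    have h0 : 0 ≤ E ^ (K * L) := by positivity
    nlinarith

theorem KK_embed : ∃ σ : KK →ₐ[ℚ] ℂ, ∀ z : KK, σ z = ((z:ℝ):ℂ) := by
  refine ⟨((Complex.ofRealAm).restrictScalars ℚ).comp KK.val, fun z => ?_⟩
  rfl

theorem isInt_det {ι : Type} [Fintype ι] [DecidableEq ι] (A : Matrix ι ι KK) (h : ∀ i j, IsIntegral ℤ (A i j)) :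
    IsIntegral ℤ A.det := by
  rw [Matrix.det_apply]
  refine IsIntegral.sum _ fun σ _ => ?_
  have h1 : IsIntegral ℤ (∏ i, A (σ i) i) := IsIntegral.prod _ fun i _ => h _ _
  rcases Int.units_eq_one_or (Equiv.Perm.sign σ) with h2 | h2 <;> rw [h2]
  · simpa using h1
  · simpa using h1.neg

theorem lower_bd (K L q R S : ℕ) (α1 α2 b : KK) (h1 h2 X : ℝ) (hh1 : 0 ≤ h1) (hh2 : 0 ≤ h2) (hX : 1 ≤ X)
    (i1 : IsIntegral ℤ α1) (i2 : IsIntegral ℤ α2) (ib : IsIntegral ℤ b)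
    (n1 : ∀ σ : KK →ₐ[ℚ] ℂ, ‖σ α1‖ ≤ Real.exp h1)
    (n2 : ∀ σ : KK →ₐ[ℚ] ℂ, ‖σ α2‖ ≤ Real.exp h2)
    (nb : ∀ σ : KK →ₐ[ℚ] ℂ, ‖σ b‖ ≤ Real.exp h2) (b0 : b ≠ 0)
    (r s : Fin K × Fin L → ℕ) (hr : ∀ j, r j ≤ R) (hs : ∀ j, s j ≤ S) (hx : ∀ j, ((r j + q * s j : ℕ):ℝ) ≤ X)
    (T : Matrix (Fin K × Fin L) (Fin K × Fin L) ℝ)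
    (hT : ∀ f j, T f j = ((r j + q * s j : ℕ):ℝ) ^ (f.1:ℕ) * ((α1:ℝ) ^ (r j) * ((α2:ℝ) / b) ^ (s j)) ^ (f.2:ℕ))
    (hdet : T.det ≠ 0) :
    1 ≤ |T.det| * Real.exp (K * L * (L * S * h2)) *
      (((K * L).factorial : ℝ) * (X ^ K * Real.exp (L * (R * h1 + S * h2))) ^ (K * L)) ^ 5 := by
  set U : Matrix (Fin K × Fin L) (Fin K × Fin L) KK := fun f j =>
    ((r j + q * s j : ℕ) : KK) ^ (f.1:ℕ) * α1 ^ (r j * f.2) * α2 ^ (s j * f.2) * b ^ (s j * (L - 1 - f.2)) with hU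
  have bR : (b:ℝ) ≠ 0 := by simpa using b0
  have hUT : ((U.det : KK) : ℝ) = T.det * ∏ j, (b:ℝ) ^ (s j * (L - 1)) := by
    have e1 : ((U.det : KK) : ℝ) = (U.map (fun z : KK => (z:ℝ))).det := by
      have := RingHom.map_det (algebraMap KK ℝ) U
      exact this
    have e2 : U.map (fun z : KK => (z:ℝ)) = T * Matrix.diagonal (fun j => (b:ℝ) ^ (s j * (L - 1))) := by
      ext f j
      rw [Matrix.mul_diagonal, Matrix.map_apply, hT, hU]
      have hf := f.2.2
      have : s j * (L - 1) = s j * (L - 1 - f.2) + s j * f.2 := by rw [← mul_add]; congr 1; omega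
      rw [this, pow_add]
      push_cast
      rw [mul_pow, ← pow_mul, ← pow_mul, div_pow]
      field_simp
    rw [e1, e2, Matrix.det_mul, Matrix.det_diagonal]
  have hprod : (∏ j, (b:ℝ) ^ (s j * (L - 1))) ≠ 0 := Finset.prod_ne_zero_iff.2 fun j _ => pow_ne_zero _ bR
  have hU0 : U.det ≠ 0 := by
    intro h
    rw [h] at hUT
    exact mul_ne_zero hdet hprod (by simpa using hUT.symm)
  have natI : ∀ k : ℕ, IsIntegral ℤ (k : KK) := fun k => by
    simpa using isIntegral_algebraMap (R := ℤ) (A := KK) (x := (k:ℤ))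
  have hUi : IsIntegral ℤ U.det := by
    apply isInt_det
    intro f j
    exact ((((natI _).pow _).mul (i1.pow _)).mul (i2.pow _)).mul (ib.pow _)
  have hent : ∀ (σ : KK →ₐ[ℚ] ℂ) f j, ‖σ (U f j)‖ ≤ X ^ K * Real.exp (L * (R * h1 + S * h2)) := by
    intro σ f j
    rw [hU]
    simp only [map_mul, map_pow, map_natCast, norm_mul, norm_pow, RCLike.norm_natCast]
    have hf := f.2.2
    have hrj : (r j : ℝ) ≤ R := by exact_mod_cast hr j
    have hsj : (s j : ℝ) ≤ S := by exact_mod_cast hs j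
    have hfl : ((f.2:ℕ):ℝ) ≤ L := by exact_mod_cast hf.le
    have e1 : ((r j + q * s j : ℕ):ℝ) ^ (f.1:ℕ) ≤ X ^ K :=
      (pow_le_pow_left₀ (by positivity) (hx j) _).trans (pow_le_pow_right₀ hX f.1.2.le)
    have e2 : ‖σ α1‖ ^ (r j * (f.2:ℕ)) ≤ Real.exp (L * (R * h1)) := by
      refine (pow_le_pow_left₀ (norm_nonneg _) (n1 σ) _).trans ?_
      rw [← Real.exp_nat_mul]
      apply Real.exp_le_exp.2
      push_cast
      calc (r j : ℝ) * (f.2:ℕ) * h1 ≤ R * L * h1 := by gcongr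
        _ = _ := by ring
    have e3 : ‖σ α2‖ ^ (s j * (f.2:ℕ)) * ‖σ b‖ ^ (s j * (L - 1 - (f.2:ℕ))) ≤ Real.exp (L * (S * h2)) := by
      calc _ ≤ Real.exp h2 ^ (s j * (f.2:ℕ)) * Real.exp h2 ^ (s j * (L - 1 - (f.2:ℕ))) := by
            gcongr
            · exact n2 σ
            · exact nb σ
        _ = Real.exp ((s j * (L - 1) : ℕ) * h2) := by
            rw [← pow_add, ← Real.exp_nat_mul]; congr 3; rw [← mul_add]; congr 1; omega
        _ ≤ _ := by
            apply Real.exp_le_exp.2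
            have : ((L - 1 : ℕ):ℝ) ≤ L := by exact_mod_cast Nat.sub_le _ _
            push_cast
            calc (s j : ℝ) * ((L - 1 : ℕ):ℝ) * h2 ≤ S * L * h2 := by gcongr
              _ = _ := by ring
    calc _ = ((r j + q * s j : ℕ):ℝ) ^ (f.1:ℕ) * (‖σ α1‖ ^ (r j * (f.2:ℕ)) * (‖σ α2‖ ^ (s j * (f.2:ℕ)) * ‖σ b‖ ^ (s j * (L - 1 - (f.2:ℕ))))) := by ring
      _ ≤ X ^ K * (Real.exp (L * (R * h1)) * Real.exp (L * (S * h2))) := by gcongr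
      _ = _ := by rw [← Real.exp_add, mul_add (L:ℝ)]
  have hM1 : 1 ≤ X ^ K * Real.exp (L * (R * h1 + S * h2)) := by
    have := one_le_pow₀ hX (n := K)
    have : 1 ≤ Real.exp (L * (R * h1 + S * h2)) := Real.one_le_exp (by positivity)
    nlinarith
  have hdetσ : ∀ σ : KK →ₐ[ℚ] ℂ, ‖σ U.det‖ ≤
      ((K * L).factorial : ℝ) * (X ^ K * Real.exp (L * (R * h1 + S * h2))) ^ (K * L) := by
    intro σ
    have e1 : σ U.det = (U.map σ).det := RingHom.map_det (σ : KK →+* ℂ) U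
    rw [e1]
    have := Matrix.det_le (A := U.map σ) (abv := (NormedField.toAbsoluteValue ℂ)) (x := X ^ K * Real.exp (L * (R * h1 + S * h2)))
      (fun f j => hent σ f j)
    rw [Fintype.card_prod, Fintype.card_fin, Fintype.card_fin, nsmul_eq_mul] at this
    exact this
  have hMf : 1 ≤ ((K * L).factorial : ℝ) * (X ^ K * Real.exp (L * (R * h1 + S * h2))) ^ (K * L) := by
    have a1 : (1:ℝ) ≤ ((K * L).factorial : ℝ) := by exact_mod_cast Nat.factorial_pos _
    have a2 := one_le_pow₀ hM1 (n := K * L)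
    nlinarith
  have main := liouville_KK U.det hUi hU0 _ hMf hdetσ
  refine main.trans ?_
  gcongr
  rw [hUT, abs_mul]
  gcongr
  obtain ⟨σ, hσ⟩ := KK_embed
  have hbb : |(b:ℝ)| ≤ Real.exp h2 := by
    have := nb σ
    rw [hσ] at this
    simpa using this
  rw [Finset.abs_prod]
  calc ∏ j, |(b:ℝ) ^ (s j * (L - 1))| ≤ ∏ j : Fin K × Fin L, Real.exp (L * S * h2) := by
        refine Finset.prod_le_prod (fun j _ => abs_nonneg _) fun j _ => ?_
        rw [abs_pow]
        refine (pow_le_pow_left₀ (abs_nonneg _) hbb _).trans ?_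
        rw [← Real.exp_nat_mul]
        apply Real.exp_le_exp.2
        have : ((L - 1 : ℕ):ℝ) ≤ L := by exact_mod_cast Nat.sub_le _ _
        have hsj : (s j : ℝ) ≤ S := by exact_mod_cast hs j
        push_cast
        calc (s j : ℝ) * ((L - 1 : ℕ):ℝ) * h2 ≤ S * L * h2 := by gcongr
          _ = _ := by ring
    _ = _ := by
        rw [Finset.prod_const, Finset.card_univ, ← Real.exp_nat_mul]; simp

theorem comb (K L R2 S q : ℕ) (hK : 1 ≤ K) (hL : 1 ≤ L) (hq : R2 ≤ q) (hcard : K * L ≤ R2 * S)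
    (α1 α2 b : KK) (h1 h2 X E w Λ : ℝ) (hh1 : 0 ≤ h1) (hh2 : 0 ≤ h2) (hX : 1 ≤ X) (hE : 1 ≤ E)
    (i1 : IsIntegral ℤ α1) (i2 : IsIntegral ℤ α2) (ib : IsIntegral ℤ b)
    (n1 : ∀ σ : KK →ₐ[ℚ] ℂ, ‖σ α1‖ ≤ Real.exp h1)
    (n2 : ∀ σ : KK →ₐ[ℚ] ℂ, ‖σ α2‖ ≤ Real.exp h2)
    (nb : ∀ σ : KK →ₐ[ℚ] ℂ, ‖σ b‖ ≤ Real.exp h2)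
    (p1 : 0 < (α1:ℝ)) (p1' : (α1:ℝ) ≠ 1) (p2 : 0 < (α2:ℝ)) (pb : 0 < (b:ℝ))
    (hw : Real.log (α1:ℝ) = w) (hw2 : Real.log ((α2:ℝ) / b) = q * w - Λ)
    (hXX : (R2:ℝ) + L + q * S ≤ X) (hΛ : 2 * L * S * |Λ| * E ^ (K * L) ≤ 1) :
    ((K * L : ℕ) - 1 : ℝ) / 2 * Real.log E ≤ 6 * Real.log (K * L : ℕ) + Real.log 4 + K * Real.log E
      + 6 * K * Real.log X + L * |w| * E * X + 6 * (L * ((R2 + L : ℕ) * h1 + S * h2)) := by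
  set A : Matrix (Fin (R2 + L) × Fin S) (Fin K × Fin L) ℝ := fun p f =>
    (((p.1:ℕ) + q * (p.2:ℕ) : ℕ):ℝ) ^ (f.1:ℕ) * ((α1:ℝ) ^ (p.1:ℕ) * ((α2:ℝ) / b) ^ (p.2:ℕ)) ^ (f.2:ℕ) with hA
  have hinj : ∀ v, A.mulVec v = 0 → v = 0 := by
    intro v hv
    have := zero_lemma K L R2 S q (α1:ℝ) ((α2:ℝ) / b) p1 p1' (div_pos p2 pb) hL hK hq hcard (fun i l => v (i, l)) ?_
    · ext ⟨i, l⟩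
      exact congrFun (congrFun this i) l
    · intro r hr s hs
      have h := congrFun hv (⟨r, hr⟩, ⟨s, hs⟩)
      rw [Matrix.mulVec, dotProduct, Fintype.sum_prod_type_right] at h
      refine Eq.trans ?_ h
      refine Finset.sum_congr rfl fun l _ => Finset.sum_congr rfl fun i _ => ?_
      simp only [hA]; push_cast; ring
  obtain ⟨g, hg⟩ := minor_exists A hinj
  set T := (A.submatrix g id).transpose with hTdef
  have hTdet : T.det ≠ 0 := by rw [hTdef, Matrix.det_transpose]; exact hg
  set r : Fin K × Fin L → ℕ := fun j => (g j).1
  set s : Fin K × Fin L → ℕ := fun j => (g j).2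
  have hr : ∀ j, r j ≤ R2 + L := fun j => (g j).1.2.le
  have hs : ∀ j, s j ≤ S := fun j => (g j).2.2.le
  have hx : ∀ j, ((r j + q * s j : ℕ):ℝ) ≤ X := by
    intro j
    refine le_trans ?_ hXX
    have : r j + q * s j ≤ R2 + L + q * S := by
      have := Nat.mul_le_mul_left q (hs j)
      have := hr j
      omega
    exact_mod_cast this
  have hT : ∀ f j, T f j = ((r j + q * s j : ℕ):ℝ) ^ (f.1:ℕ) * ((α1:ℝ) ^ (r j) * ((α2:ℝ) / b) ^ (s j)) ^ (f.2:ℕ) :=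
    fun f j => rfl
  have low := lower_bd K L q (R2 + L) S α1 α2 b h1 h2 X hh1 hh2 hX i1 i2 ib n1 n2 nb
    (by intro h; rw [h] at pb; simp at pb) r s hr hs hx T hT hTdet
  have up := upper_bd K L hL w Λ E X S hE hX (fun j => ((r j + q * s j : ℕ):ℝ)) (fun j => (s j : ℝ))
    (fun j => by rw [Nat.abs_cast]; exact hx j) (fun j => by rw [Nat.abs_cast]; exact_mod_cast hs j) hΛ T (by
      intro f j
      rw [hT]
      congr 1
      have e1 : (α1:ℝ) = Real.exp w := by rw [← hw, Real.exp_log p1]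
      have e2 : (α2:ℝ) / b = Real.exp (q * w - Λ) := by rw [← hw2, Real.exp_log (div_pos p2 pb)]
      rw [e1, e2, ← Real.exp_nat_mul, ← Real.exp_nat_mul, ← Real.exp_add, ← Real.exp_nat_mul]
      congr 1; push_cast; ring)
  obtain ⟨N, hN⟩ : ∃ N, N = K * L := ⟨_, rfl⟩
  have hN1 : 1 ≤ N := hN ▸ Nat.mul_pos hK hL
  rw [← hN] at low up ⊢
  rw [← Nat.cast_mul, ← hN] at low
  set a : ℝ := X ^ K * Real.exp (L * ((R2 + L : ℕ) * h1 + S * h2)) with ha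
  set c : ℝ := 4 * (E * X) ^ K * Real.exp (L * |w| * E * X) with hc
  have hE0 : 0 < E := by linarith
  have hX0 : 0 < X := by linarith
  have ha0 : 0 < a := by positivity
  have hc0 : 0 < c := by positivity
  have hf : ((N.factorial : ℕ):ℝ) ≤ (N:ℝ) ^ N := by exact_mod_cast Nat.factorial_le_pow N
  have hNr : (0:ℝ) < N := by exact_mod_cast hN1
  have tot : E ^ (N * (N - 1) / 2) ≤ ((N:ℝ) ^ N * c ^ N) * Real.exp (N * (L * S * h2)) * ((N:ℝ) ^ N * a ^ N) ^ 5 := by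
    have h3 : E ^ (N * (N - 1) / 2) * 1 ≤ E ^ (N * (N - 1) / 2) * (|T.det| * Real.exp (N * (L * S * h2)) * ((N.factorial:ℝ) * a ^ N) ^ 5) := by
      gcongr
    calc E ^ (N * (N - 1) / 2) ≤ (|T.det| * E ^ (N * (N - 1) / 2)) * (Real.exp (N * (L * S * h2)) * ((N.factorial:ℝ) * a ^ N) ^ 5) := by
          rw [mul_one] at h3; refine h3.trans (le_of_eq ?_); ring
      _ ≤ ((N.factorial:ℝ) * c ^ N) * (Real.exp (N * (L * S * h2)) * ((N.factorial:ℝ) * a ^ N) ^ 5) := by gcongr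
      _ ≤ ((N:ℝ) ^ N * c ^ N) * (Real.exp (N * (L * S * h2)) * ((N:ℝ) ^ N * a ^ N) ^ 5) := by gcongr
      _ = _ := by ring
  have lt := Real.log_le_log (by positivity) tot
  rw [Real.log_mul (by positivity) (by positivity), Real.log_mul (by positivity) (by positivity), Real.log_exp,
    Real.log_pow, Real.log_pow, Real.log_mul (by positivity) (by positivity), Real.log_mul (by positivity) (by positivity),
    Real.log_pow, Real.log_pow, Real.log_pow, ha, hc, Real.log_mul (by positivity) (by positivity), Real.log_exp,
    Real.log_mul (by positivity) (by positivity), Real.log_mul (by positivity) (by positivity), Real.log_exp,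
    Real.log_pow, Real.log_pow, Real.log_mul hE0.ne' hX0.ne'] at lt
  have hdiv : ((N * (N - 1) / 2 : ℕ):ℝ) = (N:ℝ) * ((N - 1 : ℝ) / 2) := by
    have : Even (N * (N - 1)) := Nat.even_mul_pred_self N
    obtain ⟨k, hk⟩ := this
    rw [hk, show (k + k) / 2 = k by omega]
    have : ((N * (N - 1) : ℕ):ℝ) = k + k := by exact_mod_cast hk
    rw [Nat.cast_mul, Nat.cast_sub hN1] at this
    push_cast at this
    linarith
  rw [hdiv] at lt
  have hR : 0 ≤ L * (((R2 + L : ℕ):ℝ) * h1) := by positivity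
  refine le_of_mul_le_mul_left ?_ hNr
  have := mul_nonneg hNr.le hR
  push_cast at lt this ⊢
  nlinarith

theorem log_gold_bd : 0.48 < Real.log Real.goldenRatio ∧ Real.log Real.goldenRatio < 0.482 := by
  have hp := Real.goldenRatio_pos
  constructor
  · rw [Real.lt_log_iff_exp_lt hp]
    have := Real.exp_bound' (x := 0.48) (by norm_num) (by norm_num) (n := 7) (by norm_num)
    simp only [Finset.sum_range_succ, Finset.sum_range_zero, Nat.factorial] at this
    norm_num at this
    have h2 := gold_lo
    norm_num at h2 ⊢
    linarith
  · rw [Real.log_lt_iff_lt_exp hp]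
    have := Real.sum_le_exp_of_nonneg (x := 0.482) (by norm_num) 8
    simp only [Finset.sum_range_succ, Finset.sum_range_zero, Nat.factorial] at this
    norm_num at this
    have h2 := gold_hi
    norm_num at h2 ⊢
    linarith
theorem log_plast_bd : 0.281 < Real.log plast ∧ Real.log plast < 0.2815 := by
  have hp := plast_pos
  constructor
  · rw [Real.lt_log_iff_exp_lt hp]
    have := Real.exp_bound' (x := 0.281) (by norm_num) (by norm_num) (n := 7) (by norm_num)
    simp only [Finset.sum_range_succ, Finset.sum_range_zero, Nat.factorial] at this
    norm_num at this
    have h2 := plast_lo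
    norm_num at h2 ⊢
    linarith
  · rw [Real.log_lt_iff_lt_exp hp]
    have := Real.sum_le_exp_of_nonneg (x := 0.2815) (by norm_num) 8
    simp only [Finset.sum_range_succ, Finset.sum_range_zero, Nat.factorial] at this
    norm_num at this
    have h2 := plast_hi
    norm_num at h2 ⊢
    linarith

theorem dirich (Q : ℕ) (hQ : 1 ≤ Q) : ∃ (k : ℕ) (l : ℤ), 1 ≤ k ∧ k ≤ Q ∧ (0:ℝ) ≤ l ∧ (l:ℝ) ≤ 3 * k ∧
    |k * Real.log Real.goldenRatio - l * Real.log plast| ≤ 0.2815 / Q ∧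
    k * Real.log Real.goldenRatio - l * Real.log plast ≠ 0 := by
  obtain ⟨g1, g2⟩ := log_gold_bd
  obtain ⟨r1, r2⟩ := log_plast_bd
  obtain ⟨k, hk, hkQ, h⟩ := Real.exists_nat_abs_mul_sub_round_le (Real.log Real.goldenRatio / Real.log plast) (n := Q) hQ
  obtain ⟨l, hl⟩ : ∃ l, l = round ((k:ℝ) * (Real.log Real.goldenRatio / Real.log plast)) := ⟨_, rfl⟩
  rw [← hl] at h
  have hk1 : (1:ℝ) ≤ k := by exact_mod_cast hk
  have hQ1 : (1:ℝ) ≤ Q := by exact_mod_cast hQ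
  have hr0 : 0 < Real.log plast := by linarith
  have e : k * Real.log Real.goldenRatio - l * Real.log plast = (k * (Real.log Real.goldenRatio / Real.log plast) - l) * Real.log plast := by
    field_simp
  have x1 : 1.7 ≤ Real.log Real.goldenRatio / Real.log plast := by rw [le_div_iff₀ hr0]; linarith
  have x2 : Real.log Real.goldenRatio / Real.log plast ≤ 1.72 := by rw [div_le_iff₀ hr0]; linarith
  have hle : (1:ℝ) / (Q + 1) ≤ 1 / Q := by gcongr; linarith
  have hle1 : (1:ℝ) / Q ≤ 1 := by rw [div_le_one (by linarith)]; exact hQ1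
  obtain ⟨ha, hb⟩ := abs_le.1 (h.trans (hle.trans hle1))
  refine ⟨k, l, hk, hkQ, ?_, ?_, ?_, ?_⟩
  · nlinarith
  · nlinarith
  · rw [e, abs_mul, abs_of_pos hr0]
    have := h.trans hle
    calc _ ≤ 1 / (Q:ℝ) * 0.2815 := by gcongr
      _ = _ := by ring
  · intro h0
    apply mult_indep k hk l
    apply Real.log_injOn_pos (Set.mem_Ioi.2 (by have := Real.goldenRatio_pos; positivity)) (Set.mem_Ioi.2 (by have := plast_pos; positivity))
    rw [Real.log_pow, Real.log_zpow]; linarith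

set_option maxHeartbeats 1600000 in
theorem core (n M Q H t : ℕ) (ht : 2 ^ 40 ≤ t) (hQ1 : 1 ≤ Q) (hQH : Q ≤ H) (hn1 : 83200 * (Q * H) ≤ n)
    (hn2 : t * n ≤ 2 * (Q * Q * H)) (hn3 : n ≤ 2 * t ^ 35) (a b : KK)
    (ia : IsIntegral ℤ a) (ib : IsIntegral ℤ b) (pa : 0 < (a:ℝ)) (pb : 0 < (b:ℝ))
    (hab : |Real.log b - Real.log a| ≤ 3)
    (na : ∀ σ : KK →ₐ[ℚ] ℂ, ‖σ a‖ ≤ Real.exp H) (nb : ∀ σ : KK →ₐ[ℚ] ℂ, ‖σ b‖ ≤ Real.exp H) :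
    Real.exp (-(t * (Q * H) / 8 : ℝ)) <
      |Real.log b - Real.log a + n * Real.log Real.goldenRatio - M * Real.log plast| := by
  by_contra! hcon
  obtain ⟨g1, g2⟩ := log_gold_bd
  obtain ⟨r1, r2⟩ := log_plast_bd
  obtain ⟨k, l, hk, hkQ, hl0, hl3, hw, hw0⟩ := dirich Q hQ1
  set lg := Real.log Real.goldenRatio with hlg
  set lp := Real.log plast with hlp
  set w := k * lg - l * lp with hwdef
  set Λ := Real.log b - Real.log a + n * lg - M * lp with hΛdef
  obtain ⟨W, hW⟩ : ∃ W, W = Q * H := ⟨_, rfl⟩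
  have hH1 : 1 ≤ H := hQ1.trans hQH
  have hQW : Q ≤ W := by rw [hW]; exact Nat.le_mul_of_pos_right _ hH1
  have hkW : k ≤ W := hkQ.trans hQW
  have hW1 : 1 ≤ W := hk.trans hkW
  rw [← hW] at hn1
  set q := n / k with hq
  set u := n % k with hu
  have hquk : n = q * k + u := by rw [hq, hu, mul_comm]; exact (Nat.div_add_mod n k).symm
  have huk : u < k := Nat.mod_lt _ hk
  set v : ℤ := M - q * l with hv
  -- reals
  have tR : (2:ℝ) ^ 40 ≤ t := by exact_mod_cast ht
  have QR : (1:ℝ) ≤ Q := by exact_mod_cast hQ1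
  have QHR : (Q:ℝ) ≤ H := by exact_mod_cast hQH
  have kR : (1:ℝ) ≤ k := by exact_mod_cast hk
  have kQR : (k:ℝ) ≤ Q := by exact_mod_cast hkQ
  have WR : (1:ℝ) ≤ W := by exact_mod_cast hW1
  have WQH : (W:ℝ) = Q * H := by exact_mod_cast hW
  have n1R : 83200 * (W:ℝ) ≤ n := by exact_mod_cast hn1
  have n2R : (t:ℝ) * n ≤ 2 * (Q * W) := by rw [WQH]; push_cast at *; have : (t:ℝ) * n ≤ 2 * (Q * Q * H) := by exact_mod_cast hn2
                                           linarith
  have n3R : (n:ℝ) ≤ 2 * t ^ 35 := by exact_mod_cast hn3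
  have uR : (u:ℝ) ≤ k := by exact_mod_cast huk.le
  have nR : (n:ℝ) = q * k + u := by exact_mod_cast hquk
  have hqk : (q:ℝ) * k ≤ n := by rw [nR]; have : (0:ℝ) ≤ u := by positivity
                                 linarith
  have nQ : (n:ℝ) ≤ Q * W := by
    have : 2 * (n:ℝ) ≤ t * n := mul_le_mul_of_nonneg_right (by linarith) (by linarith)
    linarith
  rw [← WQH] at hcon
  have Λ1 : |Λ| ≤ 1 := hcon.trans (Real.exp_le_one_iff.2 (by have : 0 ≤ (t:ℝ) * W / 8 := by positivity
                                                             linarith))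
  have hqw : |(q:ℝ) * w| * k ≤ 0.2815 * W := by
    rw [abs_mul, Nat.abs_cast]
    calc (q:ℝ) * |w| * k ≤ (q:ℝ) * (0.2815 / Q) * k := by gcongr
      _ = q * k * (0.2815 / Q) := by ring
      _ ≤ Q * W * (0.2815 / Q) := mul_le_mul_of_nonneg_right (hqk.trans nQ) (by positivity)
      _ = _ := by field_simp
  have hveq : (v:ℝ) * lp = u * lg + q * w + (Real.log b - Real.log a) - Λ := by
    rw [hv, hwdef, hΛdef, nR]; push_cast; ring
  have hvb : |(v:ℝ)| * 0.281 ≤ k * 0.482 + |(q:ℝ) * w| + 4 := by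
    calc |(v:ℝ)| * 0.281 ≤ |(v:ℝ)| * lp := by gcongr
      _ = |(v:ℝ) * lp| := by rw [abs_mul, abs_of_pos (by linarith : 0 < lp)]
      _ ≤ |(u:ℝ) * lg| + |(q:ℝ) * w| + |Real.log b - Real.log a| + |Λ| := by
          rw [hveq]
          exact (abs_sub _ _).trans (by gcongr; exact abs_add_three _ _ _)
      _ ≤ k * 0.482 + |(q:ℝ) * w| + 3 + 1 := by
          gcongr
          rw [abs_mul, Nat.abs_cast, abs_of_pos (by linarith : 0 < lg)]
          gcongr
      _ = _ := by ring
  set α1 : KK := gK ^ (k:ℤ) * pK ^ (-l) with hα1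
  set α2 : KK := a * (gK ^ (-(u:ℤ)) * pK ^ v) with hα2
  have gp := Real.goldenRatio_pos
  have pp := plast_pos
  have c1 : (α1:ℝ) = Real.goldenRatio ^ (k:ℤ) * plast ^ (-l) := by rw [hα1]; push_cast; rfl
  have c2 : (α2:ℝ) = a * (Real.goldenRatio ^ (-(u:ℤ)) * plast ^ v) := by rw [hα2]; push_cast; rfl
  have p1 : 0 < (α1:ℝ) := by rw [c1]; positivity
  have p2 : 0 < (α2:ℝ) := by rw [c2]; positivity
  have lw : Real.log (α1:ℝ) = w := by
    rw [c1, Real.log_mul (by positivity) (by positivity), Real.log_zpow, Real.log_zpow]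
    push_cast; ring
  have p1' : (α1:ℝ) ≠ 1 := by
    intro h; rw [h, Real.log_one] at lw; exact hw0 lw.symm
  have lw2 : Real.log ((α2:ℝ) / b) = q * w - Λ := by
    rw [Real.log_div p2.ne' pb.ne', c2, Real.log_mul pa.ne' (by positivity), Real.log_mul (by positivity) (by positivity),
      Real.log_zpow, Real.log_zpow]
    push_cast
    linarith
  set h2 : ℝ := H + k / 2 + |(v:ℝ)| / 2 with hh2
  have kh2 : k * h2 ≤ 11 * W := by
    have : (k:ℝ) * k ≤ W := by rw [WQH]; exact mul_le_mul kQR (kQR.trans QHR) (by linarith) (by linarith)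
    have h3 : (k:ℝ) * H ≤ W := by rw [WQH]; gcongr
    have h4 : (k:ℝ) ≤ W := by exact_mod_cast hkW
    have h5 : k * (|(v:ℝ)| * 0.281) ≤ k * (k * 0.482 + |(q:ℝ) * w| + 4) := mul_le_mul_of_nonneg_left hvb (by linarith)
    have h6 : k * h2 = k * H + k * k / 2 + k * |(v:ℝ)| / 2 := by rw [hh2]; ring
    rw [h6]
    ring_nf at h5 hqw this h3 ⊢
    linarith
  have main := comb (819200 * W) 1040 (41600 * (W / k + 1)) (20480 * k) q (by omega) (by norm_num)
    (by rw [hq, Nat.le_div_iff_mul_le hk]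
        have := Nat.div_mul_le_self W k
        have : (W / k + 1) * k ≤ 2 * W := by rw [add_mul, one_mul]; omega
        calc 41600 * (W / k + 1) * k = 41600 * ((W / k + 1) * k) := by ring
          _ ≤ 41600 * (2 * W) := by gcongr
          _ ≤ n := by omega)
    (by have : W ≤ (W / k + 1) * k := by
          have := Nat.lt_div_mul_add hk (a := W)
          rw [add_mul]; omega
        calc 819200 * W * 1040 ≤ 819200 * ((W / k + 1) * k) * 1040 := by gcongr
          _ = 41600 * (W / k + 1) * (20480 * k) := by ring)
    α1 α2 b (2 * k) h2 (40960 * n) t w Λ (by positivity) (by rw [hh2]; positivity) (by linarith) (by linarith [tR])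
    ((zpow_int _ gK_int gK_inv_int _).mul (zpow_int _ pK_int pK_inv_int _))
    (ia.mul ((zpow_int _ gK_int gK_inv_int _).mul (zpow_int _ pK_int pK_inv_int _))) ib
    (by
      intro σ
      rw [hα1, map_mul, map_zpow₀, map_zpow₀, norm_mul]
      obtain ⟨b1, b2⟩ := gK_bound σ
      obtain ⟨b3, b4⟩ := pK_bound σ
      rw [map_inv₀] at b2 b4
      have e1 := zpow_norm_bound (σ gK) (1/2) b1 b2 k
      have e2 := zpow_norm_bound (σ pK) (1/2) b3 b4 (-l)
      calc _ ≤ Real.exp (1 / 2 * |((k:ℤ):ℝ)|) * Real.exp (1 / 2 * |((-l:ℤ):ℝ)|) := by gcongr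
        _ = Real.exp (1 / 2 * k + 1 / 2 * l) := by
            rw [← Real.exp_add]; push_cast; rw [abs_neg, Nat.abs_cast, abs_of_nonneg hl0]
        _ ≤ _ := Real.exp_le_exp.2 (by linarith))
    (by
      intro σ
      rw [hα2, map_mul, map_mul, map_zpow₀, map_zpow₀, norm_mul, norm_mul]
      obtain ⟨b1, b2⟩ := gK_bound σ
      obtain ⟨b3, b4⟩ := pK_bound σ
      rw [map_inv₀] at b2 b4
      have e1 := zpow_norm_bound (σ gK) (1/2) b1 b2 (-u)
      have e2 := zpow_norm_bound (σ pK) (1/2) b3 b4 v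
      calc _ ≤ Real.exp H * (Real.exp (1 / 2 * |((-u:ℤ):ℝ)|) * Real.exp (1 / 2 * |(v:ℝ)|)) := by
            gcongr
            exact na σ
        _ = Real.exp (H + (1 / 2 * u + 1 / 2 * |(v:ℝ)|)) := by
            rw [← Real.exp_add, ← Real.exp_add]; push_cast; rw [abs_neg, Nat.abs_cast]
        _ ≤ _ := Real.exp_le_exp.2 (by rw [hh2]; linarith))
    (fun σ => (nb σ).trans (Real.exp_le_exp.2 (by rw [hh2]; have := abs_nonneg (v:ℝ); linarith)))
    p1 p1' p2 pb lw lw2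
  have ltlo : 27.7 ≤ Real.log t := by
    have : Real.log (2 ^ 40) ≤ Real.log t := Real.log_le_log (by positivity) tR
    rw [Real.log_pow] at this
    have := Real.log_two_gt_d9
    push_cast at *
    linarith
  have lthi : Real.log t ≤ 28 * (t / 2 ^ 40) := by
    have e1 : Real.log t = Real.log (2 ^ 40) + Real.log (t / 2 ^ 40) := by
      rw [Real.log_div (by positivity) (by positivity)]; ring
    have e2 := Real.log_le_sub_one_of_pos (x := (t:ℝ) / 2 ^ 40) (by positivity)
    have e3 : 1 ≤ (t:ℝ) / 2 ^ 40 := by rw [le_div_iff₀ (by positivity)]; linarith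
    have := Real.log_two_lt_d9
    rw [e1, Real.log_pow]
    push_cast
    linarith
  have t0 : (0:ℝ) < t := by linarith [tR, (by positivity : (0:ℝ) < 2 ^ 40)]
  have kWR : (k:ℝ) ≤ W := by exact_mod_cast hkW
  have Wdk : ((W / k : ℕ):ℝ) ≤ W / k := Nat.cast_div_le
  have Wdk2 : ((W / k : ℕ):ℝ) * k ≤ W := by
    calc ((W / k : ℕ):ℝ) * k ≤ W / k * k := by gcongr
      _ = W := by field_simp
  have main2 := main ?_ ?_
  · clear main
    have t36 : ∀ y : ℝ, 0 < y → y ≤ 2 ^ 39 * n → Real.log y ≤ 36 * Real.log t := by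
      intro y hy h
      rw [show (36:ℝ) * Real.log t = Real.log ((t:ℝ) ^ 36) by rw [Real.log_pow]; norm_num]
      apply Real.log_le_log hy
      calc y ≤ 2 ^ 39 * (2 * t ^ 35) := h.trans (by gcongr)
        _ = 2 ^ 40 * t ^ 35 := by ring
        _ ≤ t * t ^ 35 := by gcongr
        _ = _ := by ring
    have L1 := t36 (((819200 * W * 1040 : ℕ)):ℝ) (by positivity) (by push_cast; linarith)
    have L2 := t36 (40960 * n) (by linarith) (by linarith)
    have L3 : Real.log 4 ≤ Real.log t := Real.log_le_log (by norm_num) (by linarith)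
    have L4 : (1040:ℝ) * |w| * t * (40960 * n) ≤ 25600000 * W := by
      calc (1040:ℝ) * |w| * t * (40960 * n) = 1040 * 40960 * |w| * (t * n) := by ring
        _ ≤ 1040 * 40960 * (0.2815 / Q) * (2 * (Q * W)) := by gcongr
        _ = 1040 * 40960 * 0.2815 * 2 * W := by field_simp
        _ ≤ _ := by linarith
    have L5 : (((41600 * (W / k + 1) + 1040 : ℕ)):ℝ) * (2 * k) ≤ 5 * 41600 * W := by
      push_cast
      have : (41600 * (((W / k : ℕ):ℝ) + 1) + 1040) * (2 * k) = 83200 * (((W / k : ℕ):ℝ) * k) + 85280 * k := by ring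
      rw [this]; linarith
    have L6 : ((20480 * k : ℕ):ℝ) * h2 ≤ 20480 * (11 * W) := by
      push_cast
      rw [mul_assoc]
      exact mul_le_mul_of_nonneg_left kh2 (by norm_num)
    push_cast at main2 L1 L5 L6
    set x := Real.log t
    have L2' : 6 * (819200 * (W:ℝ)) * Real.log (40960 * n) ≤ 6 * (819200 * (W:ℝ)) * (36 * x) := by gcongr
    have z1 : (W:ℝ) * 27.7 ≤ W * x := mul_le_mul_of_nonneg_left ltlo (by linarith)
    have z2 : 1 * x ≤ W * x := mul_le_mul_of_nonneg_right WR (by linarith)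
    clear hveq hvb hqw kh2 nQ hqk nR n2R hcon lthi Wdk Wdk2 t36 lw lw2 hab hw
    linarith
  · push_cast
    have z1 : ((W / k : ℕ):ℝ) ≤ W := by exact_mod_cast Nat.div_le_self W k
    have z2 : (q:ℝ) * (20480 * k) = 20480 * (q * k) := by ring
    rw [z2]
    linarith
  · have E1 : (t:ℝ) ^ (819200 * W * 1040) = Real.exp (851968000 * W * Real.log t) := by
      rw [← Real.exp_log t0, ← Real.exp_nat_mul, Real.log_exp]; congr 1; push_cast; ring
    have E2 : 2 * ((1040:ℕ):ℝ) * ((20480 * k : ℕ):ℝ) ≤ Real.exp (42598400 * W) := by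
      have := Real.add_one_le_exp (42598400 * (W:ℝ))
      push_cast; linarith
    calc _ ≤ Real.exp (42598400 * W) * Real.exp (-(t * W / 8)) * Real.exp (851968000 * W * Real.log t) := by
          rw [E1]; gcongr
      _ = Real.exp (42598400 * W + -(t * W / 8) + 851968000 * W * Real.log t) := by rw [Real.exp_add, Real.exp_add]
      _ ≤ 1 := by
          rw [Real.exp_le_one_iff]
          have : 851968000 * W * Real.log t ≤ 851968000 * W * (28 * (t / 2 ^ 40)) := by gcongr
          have z1 : (W:ℝ) * 2 ^ 40 ≤ W * t := mul_le_mul_of_nonneg_left tR (by linarith)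
          clear hveq hvb hqw kh2 nQ hqk nR n2R hcon lthi Wdk Wdk2 lw lw2 hab hw
          linarith

open Real in
theorem lucas_closed (n : ℕ) : (lucasSeq n : ℝ) = goldenRatio ^ n + goldenConj ^ n ∧
    (lucasSeq (n + 1) : ℝ) = goldenRatio ^ (n + 1) + goldenConj ^ (n + 1) := by
  induction n with
  | zero => simp [lucasSeq, goldenRatio_add_goldenConj]; norm_num
  | succ n ih =>
    refine ⟨ih.2, ?_⟩
    have h1 := goldenRatio_sq
    have h2 := goldenConj_sq
    rw [lucasSeq]; push_cast
    rw [ih.1, ih.2]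
    have e1 : goldenRatio ^ (n + 1 + 1) = goldenRatio ^ n * goldenRatio ^ 2 := by ring
    have e2 : goldenConj ^ (n + 1 + 1) = goldenConj ^ n * goldenConj ^ 2 := by ring
    rw [e1, e2, h1, h2]; ring

theorem plast_inv : 1 / plast = plast ^ 2 - 1 := by
  have := plast_pos
  field_simp; linarith [plast_eq]

theorem pad_D (m : ℕ) : (padovan (m + 2) : ℝ) + plast * padovan (m + 1) + (plast ^ 2 - 1) * padovan m = plast ^ (m + 4) := by
  induction m with
  | zero => simp [padovan]; linear_combination (-plast) * plast_eq
  | succ m ih =>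
    rw [show m + 1 + 2 = m + 3 by ring, show m + 1 + 4 = (m + 4) + 1 by ring, pow_succ _ (m + 4), ← ih, padovan]
    push_cast
    rw [show m + 1 + 1 = m + 2 by ring]
    linear_combination (-(padovan m : ℝ)) * plast_eq

noncomputable def cP : ℝ := plast ^ 4 / (3 * plast ^ 2 - 1)
theorem den_bd : 4.26 < 3 * plast ^ 2 - 1 ∧ 3 * plast ^ 2 - 1 < 4.27 := by
  have h1 := plast_lo
  have h2 := plast_hi
  constructor <;> nlinarith
theorem cP_bd : 0.72 < cP ∧ cP < 0.724 := by
  obtain ⟨h1, h2⟩ := den_bd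
  have h3 := plast_lo
  have h4 := plast_hi
  have h5 : plast ^ 4 = plast ^ 2 + plast := by linear_combination plast * plast_eq
  unfold cP
  rw [h5, lt_div_iff₀ (by linarith), div_lt_iff₀ (by linarith)]
  constructor <;> nlinarith
noncomputable def eps (m : ℕ) : ℝ := padovan m - cP * plast ^ m
theorem eps_rec (m : ℕ) : eps (m + 2) = - plast * eps (m + 1) - (plast ^ 2 - 1) * eps m := by
  have h := pad_D m
  have h0 : cP * (3 * plast ^ 2 - 1) = plast ^ 4 := by
    unfold cP; have := den_bd.1; exact div_mul_cancel₀ _ (by linarith)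
  unfold eps
  have e1 : plast ^ (m + 4) = plast ^ m * plast ^ 4 := by ring
  rw [e1, ← h0] at h
  rw [pow_add, pow_succ]
  linear_combination h
theorem eps_V (m : ℕ) : eps (m+1) ^ 2 + plast * eps (m+1) * eps m + (plast ^ 2 - 1) * eps m ^ 2 ≤ 0.2 := by
  have h3 := plast_lo
  have h4 := plast_hi
  induction m with
  | zero =>
    obtain ⟨h1, h2⟩ := cP_bd
    have e0 : eps 0 = 1 - cP := by simp [eps, padovan]
    have e1 : eps 1 = 1 - cP * plast := by simp [eps, padovan]
    have a1 : |eps 0| ≤ 0.28 := by rw [e0, abs_le]; constructor <;> linarith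
    have a2 : |eps 1| ≤ 0.05 := by rw [e1, abs_le]; constructor <;> nlinarith
    obtain ⟨b1, b2⟩ := abs_le.1 a1
    obtain ⟨b3, b4⟩ := abs_le.1 a2
    have c1 : eps 1 ^ 2 ≤ 0.01 := by nlinarith
    have c2 : eps 0 ^ 2 ≤ 0.08 := by nlinarith
    have c3 : eps 1 * eps 0 ≤ 0.02 := by nlinarith
    have c4 : plast * eps 1 * eps 0 ≤ 1.3248 * 0.02 := by
      rw [mul_assoc]
      nlinarith
    have c5 : (plast ^ 2 - 1) * eps 0 ^ 2 ≤ 1 * 0.08 := by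
      apply mul_le_mul _ c2 (sq_nonneg _) (by norm_num)
      nlinarith
    simp only [zero_add]
    linarith
  | succ m ih =>
    have e := eps_rec m
    rw [show m + 1 + 1 = m + 2 by ring, e]
    have : (-plast * eps (m + 1) - (plast ^ 2 - 1) * eps m) ^ 2 + plast * (-plast * eps (m + 1) - (plast ^ 2 - 1) * eps m) * eps (m + 1) +
        (plast ^ 2 - 1) * eps (m + 1) ^ 2 = (plast ^ 2 - 1) * (eps (m+1) ^ 2 + plast * eps (m+1) * eps m + (plast ^ 2 - 1) * eps m ^ 2) := by
      ring
    rw [this]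
    have q1 : 0 ≤ plast ^ 2 - 1 := by nlinarith
    have q2 : plast ^ 2 - 1 ≤ 1 := by nlinarith
    nlinarith
theorem eps_bd (m : ℕ) : |eps m| ≤ 1 := by
  have h := eps_V m
  have h3 := plast_lo
  have h4 := plast_hi
  have : (eps (m+1) + plast * eps m / 2) ^ 2 + (plast ^ 2 * 3 / 4 - 1) * eps m ^ 2 ≤ 0.2 := by
    refine le_trans (le_of_eq ?_) h; ring
  have q : 0.3 ≤ plast ^ 2 * 3 / 4 - 1 := by nlinarith
  have : 0.3 * eps m ^ 2 ≤ 0.2 := by nlinarith [sq_nonneg (eps (m+1) + plast * eps m / 2), sq_nonneg (eps m)]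
  rw [← sq_le_one_iff_abs_le_one]; linarith

theorem log_sub_le (p q δ : ℝ) (hp : 0 < p) (hq : 0 < q) (h : |p - q| ≤ δ * p) (h' : |p - q| ≤ δ * q) :
    |Real.log p - Real.log q| ≤ δ := by
  rw [← Real.log_div hp.ne' hq.ne']
  have h1 := Real.log_le_sub_one_of_pos (div_pos hp hq)
  have h2 := Real.one_sub_inv_le_log_of_pos (div_pos hp hq)
  have e1 : p / q - 1 ≤ δ := by
    rw [div_sub_one hq.ne', div_le_iff₀ hq]; exact (le_abs_self _).trans h'
  have e2 : -δ ≤ 1 - (p / q)⁻¹ := by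
    rw [inv_div, one_sub_div hp.ne', le_div_iff₀ hp]
    have := neg_abs_le (p - q)
    linarith
  rw [abs_le]; constructor <;> linarith

theorem pow_gold (n : ℕ) : Real.goldenRatio ^ n = Real.exp (n * Real.log Real.goldenRatio) := by
  rw [Real.exp_nat_mul, Real.exp_log Real.goldenRatio_pos]
theorem pow_plast (n : ℕ) : plast ^ n = Real.exp (n * Real.log plast) := by
  rw [Real.exp_nat_mul, Real.exp_log plast_pos]

open Real in
set_option maxHeartbeats 800000 in
theorem asymp (n n₁ m m₁ : ℕ) (hn : 300 ≤ n) (hn₁ : 1 ≤ n₁) (hnn₁ : n₁ < n) (hm₁ : 1 ≤ m₁) (hmm₁ : m₁ < m)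
    (heq : (lucasSeq n : ℤ) - (lucasSeq n₁ : ℤ) = (padovan m : ℤ) - (padovan m₁ : ℤ)) :
    ∃ X Y : ℝ, X = (goldenRatio⁻¹) ^ (n - n₁) ∧ Y = (plast⁻¹) ^ (m - m₁) ∧ 0 < X ∧ 0 < Y ∧
      0.38 ≤ 1 - X ∧ 0.245 ≤ 1 - Y ∧
      |n * log goldenRatio - (m * log plast + log cP)| ≤ 10 * X + 5 * Y ∧
      |n * log goldenRatio + log (1 - X) - (m * log plast + log cP)| ≤ 23 * Y ∧
      |n * log goldenRatio - (m * log plast + log cP) - log (1 - Y)| ≤ 10 * X ∧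
      |n * log goldenRatio + log (1 - X) - (m * log plast + log cP) - log (1 - Y)| ≤ 11 * (goldenRatio⁻¹) ^ n := by
  have gp := goldenRatio_pos
  have pp := plast_pos
  have g1 := gold_lo
  have r1 := plast_lo
  have r2 := plast_hi
  obtain ⟨c1, c2⟩ := cP_bd
  have heqR : (lucasSeq n : ℝ) - lucasSeq n₁ = padovan m - padovan m₁ := by exact_mod_cast heq
  set F := goldenRatio ^ n with hF
  set C := cP * plast ^ m with hC
  set X := (goldenRatio⁻¹) ^ (n - n₁) with hX
  set Y := (plast⁻¹) ^ (m - m₁) with hY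
  have hFX : F * X = goldenRatio ^ n₁ := by
    have e : F = goldenRatio ^ n₁ * goldenRatio ^ (n - n₁) := by rw [hF, ← pow_add]; congr 1; omega
    rw [e, hX, inv_pow, mul_assoc, mul_inv_cancel₀ (by positivity), mul_one]
  have hCY : C * Y = cP * plast ^ m₁ := by
    have e : plast ^ m = plast ^ m₁ * plast ^ (m - m₁) := by rw [← pow_add]; congr 1; omega
    rw [hC, e, hY, inv_pow, mul_assoc, mul_assoc, mul_inv_cancel₀ (by positivity), mul_one]
  have X0 : 0 < X := by positivity
  have Y0 : 0 < Y := by positivity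
  have hX1 : X ≤ 0.62 := by
    have a1 : goldenRatio⁻¹ ≤ 0.62 := by rw [inv_le_comm₀ gp (by norm_num)]; norm_num at *; linarith
    calc X ≤ (goldenRatio⁻¹) ^ 1 := pow_le_pow_of_le_one (by positivity) (by linarith) (by omega)
      _ ≤ _ := by simpa using a1
  have hY1 : Y ≤ 0.755 := by
    have a1 : plast⁻¹ ≤ 0.755 := by rw [inv_le_comm₀ pp (by norm_num)]; norm_num at *; linarith
    calc Y ≤ (plast⁻¹) ^ 1 := pow_le_pow_of_le_one (by positivity) (by linarith) (by omega)
      _ ≤ _ := by simpa using a1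
  have F0 : 0 < F := by positivity
  have C0 : 0 < C := by positivity
  have FX1 : 1.6 ≤ F * X := by
    rw [hFX]
    calc (1.6:ℝ) ≤ goldenRatio ^ 1 := by rw [pow_one]; linarith
      _ ≤ _ := pow_le_pow_right₀ (by linarith) hn₁
  have CY1 : 0.95 ≤ C * Y := by
    rw [hCY]
    have : plast ^ 1 ≤ plast ^ m₁ := pow_le_pow_right₀ (by linarith) hm₁
    nlinarith
  have Fbig : 10000 ≤ F := by
    calc (10000:ℝ) ≤ (1.6:ℝ) ^ 20 := by norm_num
      _ ≤ goldenRatio ^ 20 := by gcongr; linarith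
      _ ≤ _ := pow_le_pow_right₀ (by linarith) (by omega)
  have psi : ∀ k, |goldenConj ^ k| ≤ 1 := by
    intro k
    rw [abs_pow]
    apply pow_le_one₀ (abs_nonneg _)
    rw [abs_le]
    exact ⟨neg_one_lt_goldenConj.le, by linarith [goldenConj_neg]⟩
  have hθ : |F * (1 - X) - C * (1 - Y)| ≤ 4 := by
    have e : F * (1 - X) - C * (1 - Y) = goldenConj ^ n₁ - goldenConj ^ n + (eps m - eps m₁) := by
      have a1 := (lucas_closed n).1
      have a2 := (lucas_closed n₁).1
      unfold eps
      rw [mul_sub, mul_sub, hFX, hCY, hF, hC]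
      rw [a1, a2] at heqR
      linarith
    rw [e]
    have := abs_add_le (goldenConj ^ n₁ - goldenConj ^ n) (eps m - eps m₁)
    have := abs_sub (goldenConj ^ n₁) (goldenConj ^ n)
    have := abs_sub (eps m) (eps m₁)
    linarith [psi n, psi n₁, eps_bd m, eps_bd m₁]
  obtain ⟨t1, t2⟩ := abs_le.1 hθ
  clear_value F C X Y
  have FXl : 0.38 * F ≤ F * (1 - X) := by
    have := mul_le_mul_of_nonneg_left hX1 F0.le
    linarith only [this]
  have CYl : 0.37 * F ≤ C * (1 - Y) := by linarith only [FXl, t2, Fbig]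
  have CC : C * (1 - Y) ≤ C := by linarith only [mul_pos C0 Y0]
  have FF : F * (1 - X) ≤ F := by linarith only [mul_pos F0 X0]
  have Cl : 0.245 * C ≤ C * (1 - Y) := by
    have := mul_le_mul_of_nonneg_left hY1 C0.le
    linarith only [this]
  have Cbig : 3700 ≤ C := by linarith
  have FC : 0.24 * C ≤ F * (1 - X) := by linarith
  have lF : log F = n * log goldenRatio := by rw [hF, log_pow]
  have lC : log C = m * log plast + log cP := by
    rw [hC, log_mul (by linarith) (by positivity), log_pow]; ring
  have X1 : 0 < 1 - X := by linarith
  have Y1 : 0 < 1 - Y := by linarith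
  have lFX : log (F * (1 - X)) = n * log goldenRatio + log (1 - X) := by rw [log_mul F0.ne' X1.ne', lF]
  have lCY : log (C * (1 - Y)) = m * log plast + log cP + log (1 - Y) := by rw [log_mul C0.ne' Y1.ne', lC]
  have q1 := mul_le_mul_of_nonneg_right FC Y0.le
  have q2 := mul_le_mul_of_nonneg_right FF Y0.le
  have q3 := mul_le_mul_of_nonneg_right CYl X0.le
  have q4 := mul_le_mul_of_nonneg_right CC X0.le
  have q5 := mul_pos F0 X0
  have q6 := mul_pos C0 Y0
  have q7 := mul_pos F0 Y0
  have q8 := mul_pos C0 X0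
  obtain ⟨FA, hFA⟩ : ∃ FA, FA = F * (1 - X) := ⟨_, rfl⟩
  obtain ⟨CA, hCA⟩ : ∃ CA, CA = C * (1 - Y) := ⟨_, rfl⟩
  have FA0 : 0 < FA := by rw [hFA]; positivity
  have CA0 : 0 < CA := by rw [hCA]; positivity
  rw [← hFA] at q1 q2 FXl t1 t2 lFX
  rw [← hCA] at q3 q4 CYl t1 t2 lCY
  have hFA' : FA = F - F * X := by rw [hFA]; ring
  have hCA' : CA = C - C * Y := by rw [hCA]; ring
  refine ⟨X, Y, rfl, rfl, X0, Y0, by linarith, by linarith, ?_, ?_, ?_, ?_⟩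
  · rw [← lF, ← lC]
    have : |F - C| ≤ 3.5 * (F * X) + C * Y := by
      rw [abs_le]; constructor <;> linarith
    apply log_sub_le _ _ _ F0 C0
    · rw [add_mul]; linarith
    · rw [add_mul]; linarith
  · rw [← lFX, ← lC]
    have : |FA - C| ≤ 5.3 * (C * Y) := by
      rw [abs_le]; constructor <;> linarith
    apply log_sub_le _ _ _ FA0 C0 <;> linarith
  · rw [sub_sub, ← lF, ← lCY]
    have : |F - CA| ≤ 3.5 * (F * X) := by
      rw [abs_le]; constructor <;> linarith
    apply log_sub_le _ _ _ F0 CA0 <;> linarith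
  · rw [sub_sub, ← lFX, ← lCY]
    have hFi : F * (goldenRatio⁻¹) ^ n = 1 := by rw [hF, inv_pow]; field_simp
    have Fi0 : 0 < (goldenRatio⁻¹) ^ n := by positivity
    have : |FA - CA| ≤ 4 := by
      rw [abs_le]; constructor <;> linarith
    have z1 := mul_le_mul_of_nonneg_right FXl Fi0.le
    have z2 := mul_le_mul_of_nonneg_right CYl Fi0.le
    apply log_sub_le _ _ _ FA0 CA0 <;> linarith

theorem pow35 (t : ℕ) (hB : 100 ≤ t) : (t + 1) ^ 35 ≤ 2 * t ^ 35 := by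
  have tR : (100:ℝ) ≤ t := by exact_mod_cast hB
  have tp : (0:ℝ) < t + 1 := by positivity
  have b := one_add_mul_le_pow (a := -(1 / ((t:ℝ) + 1))) (by
    have : 1 / ((t:ℝ) + 1) ≤ 1 := by rw [div_le_one tp]; linarith
    linarith) 35
  have e : 1 + -(1 / ((t:ℝ) + 1)) = t / (t + 1) := by field_simp; ring
  rw [e, div_pow] at b
  have c : (1:ℝ) / 2 ≤ 1 + ((35:ℕ):ℝ) * -(1 / (t + 1)) := by
    have : 1 / ((t:ℝ) + 1) ≤ 1 / 70 := by
      apply one_div_le_one_div_of_le (by norm_num)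
      linarith
    push_cast; linarith
  have d := c.trans b
  rw [le_div_iff₀ (by positivity)] at d
  have : ((t + 1) ^ 35 : ℝ) ≤ 2 * t ^ 35 := by linarith
  exact_mod_cast this

theorem root35 (n B : ℕ) (hB : 100 ≤ B) (hn : B ^ 35 ≤ n) : ∃ t : ℕ, B ≤ t ∧ t ^ 35 ≤ n ∧ n ≤ 2 * t ^ 35 := by
  have h0 : ∃ t, n < (t + 1) ^ 35 := ⟨n, lt_of_lt_of_le (Nat.lt_succ_self n) (Nat.le_self_pow (by norm_num) _)⟩
  classical
  have h1 := Nat.find_spec h0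
  have hm := fun s => Nat.find_min h0 (m := s)
  generalize Nat.find h0 = t at h1 hm
  have h2 : B ≤ t := by
    have := lt_of_pow_lt_pow_left₀ 35 (Nat.zero_le _) (lt_of_le_of_lt hn h1)
    exact Nat.lt_succ_iff.1 this
  refine ⟨t, h2, ?_, h1.le.trans (pow35 t (hB.trans h2))⟩
  cases t with
  | zero => exact absurd (hB.trans h2) (by norm_num)
  | succ s => exact not_lt.1 (hm s (Nat.lt_succ_self s))

theorem exp_lb (x y : ℝ) (C : ℝ) (hC2 : C ≤ 23) (h : Real.exp (-x) < C * Real.exp (-y)) : y < x + 4 := by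
  by_contra! hc
  have h1 : Real.exp (-y) ≤ Real.exp (-x) * Real.exp (-4) := by
    rw [← Real.exp_add]; apply Real.exp_le_exp.2; linarith
  have h2 : (23:ℝ) * Real.exp (-4) ≤ 1 := by
    rw [Real.exp_neg, ← div_eq_mul_inv, div_le_one (Real.exp_pos _)]
    have := Real.sum_le_exp_of_nonneg (x := 4) (by norm_num) 5
    simp only [Finset.sum_range_succ, Finset.sum_range_zero, Nat.factorial] at this
    norm_num at this
    linarith
  have h3 := Real.exp_pos (-x)
  have h4 := Real.exp_pos (-4)
  have : C * Real.exp (-y) ≤ 23 * (Real.exp (-x) * Real.exp (-4)) := by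
    calc C * Real.exp (-y) ≤ 23 * Real.exp (-y) := by gcongr
      _ ≤ _ := by gcongr
  nlinarith

noncomputable def bK (x : KK) : KK := (3 * pK ^ 2 - 1) * x
theorem bK_coe (x : KK) : ((bK x : KK):ℝ) = (3 * plast ^ 2 - 1) * x := by
  unfold bK; push_cast; rfl
theorem bK_int (x : KK) (h : IsIntegral ℤ x) : IsIntegral ℤ (bK x) := by
  have h3 : IsIntegral ℤ (3 : KK) := by simpa using isIntegral_algebraMap (R := ℤ) (A := KK) (x := 3)
  exact ((h3.mul (pK_int.pow 2)).sub isIntegral_one).mul h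
theorem exp_one_lt : Real.exp 1 < 3 := lt_trans Real.exp_one_lt_d9 (by norm_num)
theorem bK_norm (x : KK) (σ : KK →ₐ[ℚ] ℂ) : ‖σ (bK x)‖ ≤ 10 * ‖σ x‖ := by
  unfold bK
  rw [map_mul, norm_mul]
  gcongr
  rw [map_sub, map_mul, map_pow, map_one, map_ofNat]
  refine (norm_sub_le _ _).trans ?_
  rw [norm_mul, norm_pow, norm_one]
  have h1 := (pK_bound σ).1
  have h2 : ‖σ pK‖ ^ 2 ≤ Real.exp 1 := by
    calc ‖σ pK‖ ^ 2 ≤ Real.exp (1/2) ^ 2 := by gcongr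
      _ = Real.exp 1 := by rw [← Real.exp_nat_mul]; norm_num
  have := exp_one_lt
  have h3 : ‖(3:ℂ)‖ = 3 := by simp
  rw [h3]; linarith

theorem one_sub_norm (z : KK) (hb : ∀ σ : KK →ₐ[ℚ] ℂ, ‖σ z⁻¹‖ ≤ Real.exp (1/2)) (d : ℕ) (σ : KK →ₐ[ℚ] ℂ) :
    ‖σ (1 - (z⁻¹) ^ d)‖ ≤ 2 * Real.exp (d / 2) := by
  rw [map_sub, map_one, map_pow]
  refine (norm_sub_le _ _).trans ?_
  rw [norm_pow, norm_one]
  have : ‖σ z⁻¹‖ ^ d ≤ Real.exp (d / 2) := by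
    calc ‖σ z⁻¹‖ ^ d ≤ Real.exp (1/2) ^ d := by gcongr; exact hb σ
      _ = _ := by rw [← Real.exp_nat_mul]; congr 1; ring
  have : 1 ≤ Real.exp ((d:ℝ) / 2) := Real.one_le_exp (by positivity)
  linarith

theorem small_exp (H d : ℝ) (h : d / 2 + 3 ≤ H) : 20 * Real.exp (d / 2) ≤ Real.exp H := by
  have : (20:ℝ) ≤ Real.exp 3 := by
    have := Real.exp_one_gt_d9
    calc (20:ℝ) ≤ (2.7182818283:ℝ) ^ 3 := by norm_num
      _ ≤ Real.exp 1 ^ 3 := by gcongr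
      _ = _ := by rw [← Real.exp_nat_mul]; norm_num
  calc 20 * Real.exp (d / 2) ≤ Real.exp 3 * Real.exp (d / 2) := by gcongr
    _ = Real.exp (3 + d / 2) := by rw [Real.exp_add]
    _ ≤ _ := Real.exp_le_exp.2 (by linarith)

open Real in
theorem stage_core (n m Q H t : ℕ) (ht : 2 ^ 40 ≤ t) (hQ1 : 1 ≤ Q) (hQH : Q ≤ H) (hn1 : 83200 * (Q * H) ≤ n)
    (hn2 : t * n ≤ 2 * (Q * Q * H)) (hn3 : n ≤ 2 * t ^ 35) (a x : KK)
    (ia : IsIntegral ℤ a) (ix : IsIntegral ℤ x) (pa : 0.245 ≤ (a:ℝ)) (px : 0.38 ≤ (x:ℝ)) (pa1 : (a:ℝ) ≤ 1) (px1 : (x:ℝ) ≤ 1)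
    (na : ∀ σ : KK →ₐ[ℚ] ℂ, ‖σ a‖ ≤ Real.exp H) (nx : ∀ σ : KK →ₐ[ℚ] ℂ, 10 * ‖σ x‖ ≤ Real.exp H) :
    Real.exp (-(t * (Q * H) / 8 : ℝ)) <
      |n * log goldenRatio + log x - (m * log plast + log cP) - log a| := by
  obtain ⟨d1, d2⟩ := den_bd
  have pp := plast_pos
  have a0 : 0 < (a:ℝ) := by linarith
  have x0 : 0 < (x:ℝ) := by linarith
  have lb : log ((bK x : KK):ℝ) = log (3 * plast ^ 2 - 1) + log x := by
    rw [bK_coe, log_mul (by linarith) x0.ne']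
  have lc : log cP = 4 * log plast - log (3 * plast ^ 2 - 1) := by
    rw [cP, log_div (by positivity) (by linarith), log_pow]; norm_num
  have h1 := core n (m + 4) Q H t ht hQ1 hQH hn1 hn2 hn3 a (bK x) ia (bK_int x ix) a0
    (by rw [bK_coe]; exact mul_pos (by linarith) x0) ?_ na (fun σ => (bK_norm x σ).trans (nx σ))
  · refine lt_of_lt_of_eq h1 ?_
    rw [lb, lc]; congr 1; push_cast; ring
  · have b1 : log (3 * plast ^ 2 - 1) ≤ 1.5 := by
      rw [log_le_iff_le_exp (by linarith)]
      have := exp_half_lo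
      calc 3 * plast ^ 2 - 1 ≤ 1.64 ^ 3 := by norm_num at d2 ⊢; linarith
        _ ≤ exp (1/2) ^ 3 := by gcongr
        _ = exp 1.5 := by rw [← exp_nat_mul]; norm_num
    have b2 : 0 ≤ log (3 * plast ^ 2 - 1) := log_nonneg (by linarith)
    have b3 : log x ≤ 0 := log_nonpos x0.le px1
    have b4 : log a ≤ 0 := log_nonpos a0.le pa1
    have b5 : -1.5 ≤ log a := by
      rw [le_log_iff_exp_le a0, exp_neg]
      refine le_trans ?_ pa
      rw [inv_le_comm₀ (exp_pos _) (by norm_num)]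
      calc (0.245:ℝ)⁻¹ ≤ 1.64 ^ 3 := by norm_num
        _ ≤ exp (1/2) ^ 3 := by gcongr; exact exp_half_lo.le
        _ = exp 1.5 := by rw [← exp_nat_mul]; norm_num
    have b6 : -1.5 ≤ log x := by
      rw [le_log_iff_exp_le x0, exp_neg]
      refine le_trans ?_ px
      rw [inv_le_comm₀ (exp_pos _) (by norm_num)]
      calc (0.38:ℝ)⁻¹ ≤ 1.64 ^ 3 := by norm_num
        _ ≤ exp (1/2) ^ 3 := by gcongr; exact exp_half_lo.le
        _ = exp 1.5 := by rw [← exp_nat_mul]; norm_num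
    rw [lb, abs_le]; constructor <;> linarith

open Real in
set_option maxHeartbeats 800000 in
theorem bound1 (n n₁ m m₁ : ℕ) (hn : 300 ≤ n) (hn₁ : 1 ≤ n₁) (hnn₁ : n₁ < n) (hm₁ : 1 ≤ m₁) (hmm₁ : m₁ < m)
    (heq : (lucasSeq n : ℤ) - (lucasSeq n₁ : ℤ) = (padovan m : ℤ) - (padovan m₁ : ℤ)) : n < (2 ^ 40) ^ 35 := by
  by_contra! hbig
  obtain ⟨t, ht, htn, hnt⟩ := root35 n (2 ^ 40) (by norm_num) hbig
  obtain ⟨X, Y, hX, hY, X0, Y0, X1, Y1, A1, A2, A3, A4⟩ := asymp n n₁ m m₁ hn hn₁ hnn₁ hm₁ hmm₁ heq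
  clear hbig heq
  obtain ⟨g1, g2⟩ := log_gold_bd
  obtain ⟨r1, r2⟩ := log_plast_bd
  generalize n - n₁ = d at hX
  generalize m - m₁ = e at hY
  have t1 : 1 ≤ t := le_trans (by norm_num) ht
  have t8 : 83200 ≤ t := le_trans (by norm_num) ht
  have tR : (83200:ℝ) ≤ t := by exact_mod_cast t8
  have eX : X = exp (-(d * log goldenRatio)) := by rw [hX, inv_pow, pow_gold, exp_neg]
  have eY : Y = exp (-(e * log plast)) := by rw [hY, inv_pow, pow_plast, exp_neg]
  have eN : (goldenRatio⁻¹) ^ n = exp (-(n * log goldenRatio)) := by rw [inv_pow, pow_gold, exp_neg]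
  rw [eN] at A4
  have hn2 : ∀ j k : ℕ, j + j + k = 36 → t * n ≤ 2 * (t ^ j * t ^ j * t ^ k) := by
    intro j k h
    rw [← pow_add, ← pow_add, h]
    calc t * n ≤ t * (2 * t ^ 35) := Nat.mul_le_mul_left _ hnt
      _ = _ := by ring
  have hn1 : ∀ j k : ℕ, j + k ≤ 34 → 83200 * (t ^ j * t ^ k) ≤ n := by
    intro j k h
    rw [← pow_add]
    calc 83200 * t ^ (j + k) ≤ t * t ^ 34 := Nat.mul_le_mul t8 (Nat.pow_le_pow_right t1 h)
      _ = t ^ 35 := by ring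
      _ ≤ n := htn
  set xd : KK := 1 - gK⁻¹ ^ d with hxd
  set ye : KK := 1 - pK⁻¹ ^ e with hye
  have cx : (xd:ℝ) = 1 - X := by rw [hxd, hX]; push_cast; rfl
  have cy : (ye:ℝ) = 1 - Y := by rw [hye, hY]; push_cast; rfl
  have ixd : IsIntegral ℤ xd := isIntegral_one.sub (gK_inv_int.pow d)
  have iye : IsIntegral ℤ ye := isIntegral_one.sub (pK_inv_int.pow e)
  have nxd := one_sub_norm gK (fun σ => (gK_bound σ).2) d
  have nye := one_sub_norm pK (fun σ => (pK_bound σ).2) e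
  have c1 : ((1 : KK):ℝ) = 1 := rfl
  have bigt : ∀ k : ℕ, 1 ≤ k → (83200:ℝ) ≤ (t:ℝ) ^ k := by
    intro k hk
    calc (83200:ℝ) ≤ t := tR
      _ = (t:ℝ) ^ 1 := (pow_one _).symm
      _ ≤ _ := pow_le_pow_right₀ (by linarith) hk
  have hone : ∀ k : ℕ, 1 ≤ k → ∀ σ : KK →ₐ[ℚ] ℂ, 10 * ‖σ (1:KK)‖ ≤ exp ((t ^ k : ℕ):ℝ) := by
    intro k hk σ
    rw [map_one, norm_one]
    have := add_one_le_exp ((t ^ k : ℕ):ℝ)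
    have := bigt k hk
    push_cast at *; linarith
  have hone' : ∀ k : ℕ, 1 ≤ k → ∀ σ : KK →ₐ[ℚ] ℂ, ‖σ (1:KK)‖ ≤ exp ((t ^ k : ℕ):ℝ) := by
    intro k hk σ
    have := hone k hk σ
    have := norm_nonneg (σ (1:KK))
    linarith
  have hxb : ∀ k : ℕ, (d:ℝ) / 2 + 3 ≤ (t:ℝ) ^ k → ∀ σ : KK →ₐ[ℚ] ℂ, 10 * ‖σ xd‖ ≤ exp ((t ^ k : ℕ):ℝ) := by
    intro k hk σ
    have h1 := nxd σ
    have h2 := small_exp ((t:ℝ) ^ k) d hk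
    push_cast; linarith
  have hyb : ∀ k : ℕ, (e:ℝ) / 2 + 3 ≤ (t:ℝ) ^ k → ∀ σ : KK →ₐ[ℚ] ℂ, ‖σ ye‖ ≤ exp ((t ^ k : ℕ):ℝ) := by
    intro k hk σ
    have h1 := nye σ
    have h2 := small_exp ((t:ℝ) ^ k) e hk
    have := exp_pos ((e:ℝ) / 2)
    push_cast; linarith
  have dle : ∀ k : ℕ, 1 ≤ k → d * log goldenRatio < (t:ℝ) ^ k / 8 + 4 → (d:ℝ) / 2 + 3 ≤ t ^ k := by
    intro k hk h
    have := bigt k hk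
    have : (d:ℝ) * 0.48 ≤ d * log goldenRatio := by gcongr
    linarith
  have ele : ∀ k : ℕ, 1 ≤ k → e * log plast < (t:ℝ) ^ k / 8 + 4 → (e:ℝ) / 2 + 3 ≤ t ^ k := by
    intro k hk h
    have := bigt k hk
    have : (e:ℝ) * 0.281 ≤ e * log plast := by gcongr
    linarith
  have pw : ∀ j k l : ℕ, 1 + j + k = l → (t:ℝ) * (((t ^ j : ℕ):ℝ) * ((t ^ k : ℕ):ℝ)) / 8 = t ^ l / 8 := by
    intro j k l h
    subst h; push_cast; ring
  have tpow : ∀ j k : ℕ, j ≤ k → (t:ℝ) ^ j ≤ (t:ℝ) ^ k := fun j k h => pow_le_pow_right₀ (by linarith) h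
  -- stage 3
  have stage3 : d * log goldenRatio < (t:ℝ) ^ 32 / 8 + 4 → e * log plast < (t:ℝ) ^ 32 / 8 + 4 → False := by
    intro h1 h2
    have s := stage_core n m (t ^ 2) (t ^ 32) t ht (Nat.one_le_pow _ _ t1) (Nat.pow_le_pow_right t1 (by norm_num))
      (hn1 2 32 (by norm_num)) (hn2 2 32 (by norm_num)) hnt ye xd iye ixd (by rw [cy]; exact Y1) (by rw [cx]; exact X1)
      (by rw [cy]; linarith) (by rw [cx]; linarith) (hyb 32 (ele 32 (by norm_num) h2)) (hxb 32 (dle 32 (by norm_num) h1))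
    rw [cx, cy, pw 2 32 35 (by norm_num)] at s
    have := exp_lb _ _ 11 (by norm_num) (s.trans_le A4)
    have : (t:ℝ) ^ 35 ≤ n := by exact_mod_cast htn
    have : (300:ℝ) ≤ n := by exact_mod_cast hn
    have : (n:ℝ) * 0.48 ≤ n * log goldenRatio := by gcongr
    linarith
  have s1 := stage_core n m (t ^ 12) (t ^ 12) t ht (Nat.one_le_pow _ _ t1) le_rfl
      (hn1 12 12 (by norm_num)) (hn2 12 12 (by norm_num)) hnt 1 1 isIntegral_one isIntegral_one (by rw [c1]; norm_num) (by rw [c1]; norm_num)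
      (by rw [c1]) (by rw [c1]) (hone' 12 (by norm_num)) (hone 12 (by norm_num))
  rw [c1, log_one, add_zero, sub_zero, pw 12 12 25 (by norm_num)] at s1
  have s1' := s1.trans_le A1
  have big2532 := tpow 25 32 (by norm_num)
  have big2526 := tpow 25 26 (by norm_num)
  rcases le_total X Y with hXY | hXY
  · have h1 : e * log plast < (t:ℝ) ^ 25 / 8 + 4 := by
      refine exp_lb _ _ 15 (by norm_num) (lt_of_lt_of_le s1' ?_)
      rw [← eY]; linarith
    have s := stage_core n m (t ^ 5) (t ^ 26) t ht (Nat.one_le_pow _ _ t1) (Nat.pow_le_pow_right t1 (by norm_num))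
      (hn1 5 26 (by norm_num)) (hn2 5 26 (by norm_num)) hnt ye 1 iye isIntegral_one (by rw [cy]; exact Y1) (by rw [c1]; norm_num)
      (by rw [cy]; linarith) (by rw [c1]) (hyb 26 ((ele 25 (by norm_num) h1).trans big2526)) (hone 26 (by norm_num))
    rw [c1, log_one, add_zero, cy, pw 5 26 32 (by norm_num)] at s
    have h2 : d * log goldenRatio < (t:ℝ) ^ 32 / 8 + 4 := by
      refine exp_lb _ _ 10 (by norm_num) (lt_of_lt_of_le s ?_)
      rw [← eX]; exact A3
    exact stage3 h2 (by linarith)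
  · have h1 : d * log goldenRatio < (t:ℝ) ^ 25 / 8 + 4 := by
      refine exp_lb _ _ 15 (by norm_num) (lt_of_lt_of_le s1' ?_)
      rw [← eX]; linarith
    have s := stage_core n m (t ^ 5) (t ^ 26) t ht (Nat.one_le_pow _ _ t1) (Nat.pow_le_pow_right t1 (by norm_num))
      (hn1 5 26 (by norm_num)) (hn2 5 26 (by norm_num)) hnt 1 xd isIntegral_one ixd (by rw [c1]; norm_num) (by rw [cx]; exact X1)
      (by rw [c1]) (by rw [cx]; linarith) (hone' 26 (by norm_num)) (hxb 26 ((dle 25 (by norm_num) h1).trans big2526))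
    rw [c1, log_one, sub_zero, cx, pw 5 26 32 (by norm_num)] at s
    have h2 : e * log plast < (t:ℝ) ^ 32 / 8 + 4 := by
      refine exp_lb _ _ 23 (by norm_num) (lt_of_lt_of_le s ?_)
      rw [← eY]; exact A2
    exact stage3 (by linarith) h2

noncomputable def force (n : ℕ) (g : ℕ → Bool) : Bool :=
  Nat.rec (g 0) (fun k _ => g (Nat.succ k)) n

noncomputable def ser (a p : ℕ) (k : ℕ → Bool) (fuel : ℕ) : ℕ → ℕ → ℕ → Bool :=
  Nat.rec (fun _ _ _ => false)
    (fun _ ih z j acc => cond (Nat.beq z 0) (k acc)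
      (force (Nat.shiftRight (Nat.mul z a) p) fun z' =>
        force (Nat.add acc (Nat.div z j)) fun acc' =>
          force (Nat.succ j) fun j' => ih z' j' acc')) fuel

noncomputable def loopL (y p Om sh M off : ℕ) (k : List ℕ → Bool) (fuel : ℕ) : ℕ → List ℕ → Bool :=
  Nat.rec (fun _ L => k L)
    (fun _ ih a L => ser a p (fun U =>
      force (Nat.mod (Nat.add (Nat.shiftRight (Nat.mul Om U) sh) off) M) fun r =>
        force (Nat.shiftRight (Nat.mul a y) p) fun a' => ih a' (r :: L)) 8192 a 1 0) fuel

noncomputable def partA (c T : ℕ) (k : List ℕ → List ℕ → Bool) (L : List ℕ) : List ℕ → List ℕ → Bool :=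
  List.rec (fun l r => k l r)
    (fun a _ ih l r => cond (Nat.ble (Nat.add c T) a) (ih l (a :: r))
      (cond (Nat.ble (Nat.add a T) c) (ih (a :: l) r) (ih (a :: l) (a :: r)))) L

noncomputable def partB (c : ℕ) (k : List ℕ → List ℕ → Bool) (L : List ℕ) : List ℕ → List ℕ → Bool :=
  List.rec (fun l r => k l r)
    (fun b _ ih l r => cond (Nat.ble c b) (ih l (b :: r)) (ih (b :: l) r)) L

noncomputable def all1 (f : ℕ → Bool) (L : List ℕ) : Bool :=
  List.rec true (fun b _ ih => cond (f b) ih false) L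

noncomputable def sep (T : ℕ) (fuel : ℕ) : ℕ → ℕ → List ℕ → List ℕ → Bool :=
  Nat.rec (fun _ _ As Bs => all1 (fun b => all1 (fun a => cond (Nat.ble (Nat.add a T) b) true (Nat.ble (Nat.add b T) a)) As) Bs)
    (fun _ ih lo h As Bs =>
      List.rec true (fun _ _ _ => List.rec true (fun _ _ _ =>
        force (Nat.add lo h) fun c => force (Nat.shiftRight h 1) fun h' =>
          partA c T (fun l r => partB c (fun l' r' =>
            cond (ih lo h' l l') (ih c h' r r') false) Bs [] []) As [] []) Bs) As) fuel

noncomputable def chk (yF yR w p s Om T D E : ℕ) : Bool :=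
  force (Nat.sub (Nat.add s p) 40) fun sh => force (Nat.pow 2 40) fun M =>
  ser w p (fun U => force (Nat.mod (Nat.shiftRight (Nat.mul Om U) sh) M) fun off =>
    loopL yF p Om sh M 0 (fun As => loopL yR p Om sh M off (fun Bs =>
      cond (all1 (fun b => cond (Nat.ble T b) (Nat.ble (Nat.add b T) M) false) Bs)
        (sep T 12 0 (Nat.pow 2 39) As Bs) false) E yR [off]) D yF [0]) 8192 w 1 0

noncomputable def near (x p Om G P X : ℕ) : Bool :=
  ser x p (fun U => force (Nat.mul Om U) fun R => force (Nat.mul P G) fun S =>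
    cond (Nat.ble R (Nat.add S X)) (Nat.ble S (Nat.add R X)) false) 8192 x 1 0

theorem force_eq (n : ℕ) (g : ℕ → Bool) : force n g = g n := by cases n <;> rfl

theorem all1_sound (f : ℕ → Bool) (L : List ℕ) (h : all1 f L = true) : ∀ b ∈ L, f b = true := by
  induction L with
  | nil => simp
  | cons x L ih =>
    have h' : cond (f x) (all1 f L) false = true := h
    cases hx : f x with
    | false => simp [hx] at h'
    | true =>
      simp only [hx, cond_true] at h'
      intro b hb
      rcases List.mem_cons.1 hb with rfl | hb
      · exact hx
      · exact ih h' b hb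

theorem partA_sound (c T : ℕ) (k : List ℕ → List ℕ → Bool) (L : List ℕ) : ∀ l r, partA c T k L l r = true →
    ∃ l' r', k l' r' = true ∧ (∀ a ∈ l, a ∈ l') ∧ (∀ a ∈ r, a ∈ r') ∧
      (∀ a ∈ L, a ∈ l' ∨ c + T ≤ a) ∧ (∀ a ∈ L, a ∈ r' ∨ a + T ≤ c) := by
  induction L with
  | nil => intro l r h; exact ⟨l, r, h, by simp, by simp, by simp, by simp⟩
  | cons x L ih =>
    intro l r h
    have h' : cond (Nat.ble (Nat.add c T) x) (partA c T k L l (x :: r))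
      (cond (Nat.ble (Nat.add x T) c) (partA c T k L (x :: l) r) (partA c T k L (x :: l) (x :: r))) = true := h
    cases h1 : Nat.ble (Nat.add c T) x with
    | true =>
      have e1 : c + T ≤ x := Nat.le_of_ble_eq_true h1
      simp only [h1, cond_true] at h'
      obtain ⟨l', r', q, q1, q2, q3, q4⟩ := ih _ _ h'
      refine ⟨l', r', q, q1, fun a ha => q2 a (by simp [ha]), ?_, ?_⟩
      · intro a ha
        rcases List.mem_cons.1 ha with rfl | ha
        · exact Or.inr e1
        · exact q3 a ha
      · intro a ha
        rcases List.mem_cons.1 ha with rfl | ha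
        · exact Or.inl (q2 a (by simp))
        · exact q4 a ha
    | false =>
      simp only [h1, cond_false] at h'
      cases h2 : Nat.ble (Nat.add x T) c with
      | true =>
        have e1 : x + T ≤ c := Nat.le_of_ble_eq_true h2
        simp only [h2, cond_true] at h'
        obtain ⟨l', r', q, q1, q2, q3, q4⟩ := ih _ _ h'
        refine ⟨l', r', q, fun a ha => q1 a (by simp [ha]), q2, ?_, ?_⟩
        · intro a ha
          rcases List.mem_cons.1 ha with rfl | ha
          · exact Or.inl (q1 a (by simp))
          · exact q3 a ha
        · intro a ha
          rcases List.mem_cons.1 ha with rfl | ha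
          · exact Or.inr e1
          · exact q4 a ha
      | false =>
        simp only [h2, cond_false] at h'
        obtain ⟨l', r', q, q1, q2, q3, q4⟩ := ih _ _ h'
        refine ⟨l', r', q, fun a ha => q1 a (by simp [ha]), fun a ha => q2 a (by simp [ha]), ?_, ?_⟩
        · intro a ha
          rcases List.mem_cons.1 ha with rfl | ha
          · exact Or.inl (q1 a (by simp))
          · exact q3 a ha
        · intro a ha
          rcases List.mem_cons.1 ha with rfl | ha
          · exact Or.inl (q2 a (by simp))
          · exact q4 a ha

theorem partB_sound (c : ℕ) (k : List ℕ → List ℕ → Bool) (L : List ℕ) : ∀ l r, partB c k L l r = true →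
    ∃ l' r', k l' r' = true ∧ (∀ a ∈ l, a ∈ l') ∧ (∀ a ∈ r, a ∈ r') ∧
      (∀ a ∈ L, (a ∈ l' ∧ a ≤ c) ∨ (a ∈ r' ∧ c ≤ a)) := by
  induction L with
  | nil => intro l r h; exact ⟨l, r, h, by simp, by simp, by simp⟩
  | cons x L ih =>
    intro l r h
    have h' : cond (Nat.ble c x) (partB c k L l (x :: r)) (partB c k L (x :: l) r) = true := h
    cases h1 : Nat.ble c x with
    | true =>
      have e1 : c ≤ x := Nat.le_of_ble_eq_true h1
      simp only [h1, cond_true] at h'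
      obtain ⟨l', r', q, q1, q2, q3⟩ := ih _ _ h'
      refine ⟨l', r', q, q1, fun a ha => q2 a (by simp [ha]), ?_⟩
      intro a ha
      rcases List.mem_cons.1 ha with rfl | ha
      · exact Or.inr ⟨q2 a (by simp), e1⟩
      · exact q3 a ha
    | false =>
      have e1 : ¬ c ≤ x := fun h => by rw [Nat.ble_eq_true_of_le h] at h1; exact absurd h1 (by simp)
      simp only [h1, cond_false] at h'
      obtain ⟨l', r', q, q1, q2, q3⟩ := ih _ _ h'
      refine ⟨l', r', q, fun a ha => q1 a (by simp [ha]), q2, ?_⟩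
      intro a ha
      rcases List.mem_cons.1 ha with rfl | ha
      · exact Or.inl ⟨q1 a (by simp), by omega⟩
      · exact q3 a ha

theorem sep_sound (T fuel : ℕ) : ∀ lo h As Bs, sep T fuel lo h As Bs = true →
    ∀ a ∈ As, ∀ b ∈ Bs, a + T ≤ b ∨ b + T ≤ a := by
  induction fuel with
  | zero =>
    intro lo h As Bs hs a ha b hb
    have h1 := all1_sound _ _ (all1_sound _ _ hs b hb) a ha
    cases h2 : Nat.ble (Nat.add a T) b with
    | true => exact Or.inl (Nat.le_of_ble_eq_true h2)
    | false =>
      simp only [h2, cond_false] at h1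
      exact Or.inr (Nat.le_of_ble_eq_true h1)
  | succ f ih =>
    intro lo h As Bs hs
    cases As with
    | nil => simp
    | cons a0 As0 =>
      cases Bs with
      | nil => simp
      | cons b0 Bs0 =>
        have hs' : (force (Nat.add lo h) fun c => force (Nat.shiftRight h 1) fun h' =>
          partA c T (fun l r => partB c (fun l' r' =>
            cond (sep T f lo h' l l') (sep T f c h' r r') false) (b0 :: Bs0) [] []) (a0 :: As0) [] []) = true := hs
        rw [force_eq, force_eq] at hs'
        generalize Nat.add lo h = c at hs'
        generalize Nat.shiftRight h 1 = h2 at hs'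
        obtain ⟨l, r, q, -, -, q3, q4⟩ := partA_sound _ _ _ _ _ _ hs'
        obtain ⟨l', r', q', -, -, q5⟩ := partB_sound _ _ _ _ _ q
        cases h3 : sep T f lo h2 l l' with
        | false => rw [h3] at q'; simp at q'
        | true =>
          rw [h3, cond_true] at q'
          intro a ha b hb
          rcases q5 b hb with ⟨b1, b2⟩ | ⟨b1, b2⟩
          · rcases q3 a ha with a1 | a1
            · exact ih _ _ _ _ h3 a a1 b b1
            · right; omega
          · rcases q4 a ha with a1 | a1
            · exact ih _ _ _ _ q' a a1 b b1
            · left; omega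

open Real in
theorem ser_sound (x : ℝ) (a p : ℕ) (k : ℕ → Bool) (hx0 : 0 < x) (hx : x ≤ 0.755)
    (ha : (a:ℝ) ≤ x * 2 ^ p) (ha' : x * 2 ^ p ≤ a + 9) : ∀ fuel z i acc : ℕ, fuel + i ≤ 8192 →
    (z:ℝ) ≤ x ^ (i+1) * 2 ^ p → x ^ (i+1) * 2 ^ p ≤ z + 40 →
    |(∑ t ∈ Finset.range i, x ^ (t+1) / (t+1)) * 2 ^ p - acc| ≤ 41 * i →
    ser a p k fuel z (i+1) acc = true → ∃ U : ℕ, k U = true ∧ |(-log (1 - x)) * 2 ^ p - U| ≤ 2 ^ 19 := by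
  intro fuel
  have hF : (0:ℝ) < 2 ^ p := by positivity
  induction fuel with
  | zero => intro z i acc _ _ _ _ h; exact absurd h (by simp [ser])
  | succ f ih =>
    intro z i acc hi hz hz' hacc h
    have h' : cond (Nat.beq z 0) (k acc)
      (force (Nat.shiftRight (Nat.mul z a) p) fun z' =>
        force (Nat.add acc (Nat.div z (i+1))) fun acc' =>
          force (Nat.succ (i+1)) fun j' => ser a p k f z' j' acc') = true := h
    cases h0 : Nat.beq z 0 with
    | true =>
      rw [h0, cond_true] at h'
      have hz0 : z = 0 := Nat.eq_of_beq_eq_true h0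
      subst hz0
      refine ⟨acc, h', ?_⟩
      have h1 := Real.abs_log_sub_add_sum_range_le (x := x) (by rw [abs_of_pos hx0]; linarith) i
      rw [abs_of_pos hx0] at h1
      have h2 : x ^ (i+1) / (1 - x) * 2 ^ p ≤ 164 := by
        rw [div_mul_eq_mul_div, div_le_iff₀ (by linarith)]
        push_cast at hz'
        linarith
      have h3 : |((∑ t ∈ Finset.range i, x ^ (t+1) / (t+1)) + log (1 - x)) * 2 ^ p| ≤ 164 := by
        rw [abs_mul, abs_of_pos hF]
        exact (mul_le_mul_of_nonneg_right h1 hF.le).trans h2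
      have h4 : (i:ℝ) ≤ 8192 := by exact_mod_cast (by omega : i ≤ 8192)
      rw [abs_le] at h3 hacc ⊢
      constructor <;> linarith [h3.1, h3.2, hacc.1, hacc.2]
    | false =>
      rw [h0, cond_false, force_eq, force_eq, force_eq] at h'
      refine ih _ (i+1) _ (by omega) ?_ ?_ ?_ h'
      all_goals
        have hs : Nat.shiftRight (Nat.mul z a) p = z * a / 2 ^ p := Nat.shiftRight_eq_div_pow _ _
      · rw [hs]
        have h1 : ((z * a / 2 ^ p : ℕ) : ℝ) ≤ ((z * a : ℕ) : ℝ) / ((2 ^ p : ℕ) : ℝ) := Nat.cast_div_le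
        push_cast at h1
        refine h1.trans ?_
        rw [div_le_iff₀ hF]
        have : (z:ℝ) * a ≤ (x ^ (i+1) * 2 ^ p) * (x * 2 ^ p) := by gcongr
        refine this.trans (le_of_eq (by ring))
      · rw [hs]
        have h1 : z * a < (z * a / 2 ^ p + 1) * 2 ^ p := by
          have := Nat.lt_div_mul_add (a := z * a) (b := 2 ^ p) (by positivity)
          linarith [this]
        have h2 : (z:ℝ) * a < (((z * a / 2 ^ p : ℕ) : ℝ) + 1) * 2 ^ p := by exact_mod_cast h1
        generalize ((z * a / 2 ^ p : ℕ) : ℝ) = Z at h2 ⊢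
        have hzx : (z:ℝ) ≤ x * 2 ^ p := hz.trans (by
          gcongr
          calc x ^ (i+1) = x ^ i * x := pow_succ _ _
            _ ≤ 1 * x := by gcongr; exact pow_le_one₀ hx0.le (by linarith)
            _ = x := one_mul _)
        have h3 : (z * x) * 2 ^ p ≤ (Z + 1 + 9 * x) * 2 ^ p := by
          have : (z:ℝ) * (x * 2 ^ p) ≤ z * (a + 9) := by gcongr
          linarith
        have h4 := le_of_mul_le_mul_right h3 hF
        have h5 : x ^ (i+1+1) * 2 ^ p ≤ x * (z + 40) := by
          calc x ^ (i+1+1) * 2 ^ p = x * (x ^ (i+1) * 2 ^ p) := by ring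
            _ ≤ _ := by gcongr
        linarith
      · rw [Finset.sum_range_succ]
        have hd : Nat.add acc (Nat.div z (i+1)) = acc + z / (i+1) := rfl
        rw [hd]
        have hj : (0:ℝ) < (i:ℝ) + 1 := by positivity
        have h1 : ((z / (i+1) : ℕ) : ℝ) ≤ ((z : ℕ) : ℝ) / ((i+1 : ℕ) : ℝ) := Nat.cast_div_le
        have h2' : z < (z / (i+1) + 1) * (i+1) := by
          have := Nat.lt_div_mul_add (a := z) (b := i+1) (by positivity)
          linarith [this]
        have h2 : (z:ℝ) < (((z / (i+1) : ℕ) : ℝ) + 1) * ((i:ℝ)+1) := by exact_mod_cast h2'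
        push_cast at h1 ⊢
        have h1' := (le_div_iff₀ hj).1 h1
        push_cast at h2
        generalize ((z / (i+1) : ℕ) : ℝ) = W at h1' h2 ⊢
        have e1 : W ≤ x ^ (i+1) / (i+1) * 2 ^ p := by
          rw [div_mul_eq_mul_div, le_div_iff₀ hj]; linarith
        have e2 : x ^ (i+1) / (i+1) * 2 ^ p ≤ W + 41 := by
          rw [div_mul_eq_mul_div, div_le_iff₀ hj]
          have : (0:ℝ) ≤ i := by positivity
          linarith
        rw [abs_le] at hacc ⊢
        constructor <;> linarith [hacc.1, hacc.2]

section RealPart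
open Real

def App (r : ℕ) (t c : ℝ) : Prop := ∃ N : ℤ, |t * 2 ^ 40 - r - N * 2 ^ 40| ≤ c

theorem ser_top (x : ℝ) (a p : ℕ) (k : ℕ → Bool) (hx0 : 0 < x) (hx : x ≤ 0.755)
    (ha : (a:ℝ) ≤ x * 2 ^ p) (ha' : x * 2 ^ p ≤ a + 9) (h : ser a p k 8192 a 1 0 = true) :
    ∃ U : ℕ, k U = true ∧ |(-log (1 - x)) * 2 ^ p - U| ≤ 2 ^ 19 :=
  ser_sound x a p k hx0 hx ha ha' 8192 a 0 0 (by norm_num) (by simpa using ha)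
    (by simp only [zero_add, pow_one]; linarith) (by simp) h

theorem res_app (Om s p U off : ℕ) (u t0 c : ℝ) (hsp : 40 ≤ s + p) (hO : Om * 2 ^ 59 ≤ 2 ^ (s + p))
    (hU : |u * 2 ^ p - U| ≤ 2 ^ 19) (hoff : App off t0 c) :
    App (Nat.mod (Nat.add (Nat.shiftRight (Nat.mul Om U) (Nat.sub (Nat.add s p) 40)) off) (2 ^ 40))
      (Om / 2 ^ s * u + t0) (c + 2) := by
  obtain ⟨N, hN⟩ := hoff
  obtain ⟨sh, hsh⟩ : ∃ sh, sh = s + p - 40 := ⟨_, rfl⟩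
  have e0 : Nat.mod (Nat.add (Nat.shiftRight (Nat.mul Om U) (Nat.sub (Nat.add s p) 40)) off) (2 ^ 40)
     = (Om * U / 2 ^ sh + off) % 2 ^ 40 := by
    rw [hsh, ← Nat.shiftRight_eq_div_pow]; rfl
  rw [e0]
  have hpow : (2:ℝ) ^ (s + p) = 2 ^ sh * 2 ^ 40 := by
    rw [← pow_add]; congr 1; omega
  have hF : (0:ℝ) < 2 ^ sh := by positivity
  have h1 : ((Om * U / 2 ^ sh : ℕ) : ℝ) ≤ ((Om * U : ℕ) : ℝ) / ((2 ^ sh : ℕ) : ℝ) := Nat.cast_div_le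
  have h2' : Om * U < (Om * U / 2 ^ sh + 1) * 2 ^ sh := by
    have := Nat.lt_div_mul_add (a := Om * U) (b := 2 ^ sh) (by positivity)
    linarith [this]
  have h2 : (Om:ℝ) * U < (((Om * U / 2 ^ sh : ℕ) : ℝ) + 1) * 2 ^ sh := by exact_mod_cast h2'
  have hmod : (((Om * U / 2 ^ sh + off) % 2 ^ 40 : ℕ) : ℝ) =
      ((Om * U / 2 ^ sh : ℕ) : ℝ) + off - 2 ^ 40 * (((Om * U / 2 ^ sh + off) / 2 ^ 40 : ℕ) : ℝ) := by
    have := Nat.mod_add_div (Om * U / 2 ^ sh + off) (2 ^ 40)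
    have h3 : (((Om * U / 2 ^ sh + off) % 2 ^ 40 : ℕ) : ℝ) + 2 ^ 40 * (((Om * U / 2 ^ sh + off) / 2 ^ 40 : ℕ) : ℝ)
      = ((Om * U / 2 ^ sh : ℕ) : ℝ) + off := by exact_mod_cast this
    linarith
  push_cast at h1
  have h1' := (le_div_iff₀ hF).1 h1
  refine ⟨N + ((Om * U / 2 ^ sh + off) / 2 ^ 40 : ℕ), ?_⟩
  rw [hmod]
  push_cast only [Int.cast_add, Int.cast_natCast]
  generalize ((Om * U / 2 ^ sh : ℕ) : ℝ) = V at *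
  generalize (((Om * U / 2 ^ sh + off) / 2 ^ 40 : ℕ) : ℝ) = W at *
  have hOR : (Om:ℝ) * 2 ^ 59 ≤ 2 ^ sh * 2 ^ 40 := by rw [← hpow]; exact_mod_cast hO
  have hO2 : (Om:ℝ) * 2 ^ 19 ≤ 2 ^ sh := by
    have : (Om:ℝ) * 2 ^ 59 = Om * 2 ^ 19 * 2 ^ 40 := by ring
    rw [this] at hOR
    exact le_of_mul_le_mul_right hOR (by positivity)
  have key : (Om / 2 ^ s * u * 2 ^ 40) * 2 ^ sh = Om * (u * 2 ^ p) := by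
    have : (Om / 2 ^ s * u * 2 ^ 40 : ℝ) * 2 ^ sh = Om / 2 ^ s * u * (2 ^ sh * 2 ^ 40) := by ring
    rw [this, ← hpow, pow_add]; field_simp
  have h5 : |Om * (u * 2 ^ p) - Om * U| ≤ (2:ℝ) ^ sh := by
    rw [← mul_sub, abs_mul, Nat.abs_cast]
    exact (mul_le_mul_of_nonneg_left hU (by positivity)).trans hO2
  have h6 : |Om / 2 ^ s * u * 2 ^ 40 - V| ≤ 2 := by
    rw [abs_le] at h5 ⊢
    constructor
    · refine le_of_mul_le_mul_right ?_ hF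
      rw [sub_mul, key]; linarith [h5.1]
    · refine le_of_mul_le_mul_right ?_ hF
      rw [sub_mul, key]; linarith [h5.2]
  rw [abs_le] at h6 hN ⊢
  constructor <;> linarith [h6.1, h6.2, hN.1, hN.2]

theorem loopL_sound (Y : ℝ) (y p Om s off : ℕ) (t0 c : ℝ) (k : List ℕ → Bool) (hY0 : 0 < Y) (hY : Y ≤ 0.755)
    (hsp : 40 ≤ s + p) (hO : Om * 2 ^ 59 ≤ 2 ^ (s + p)) (hoff : App off t0 c)
    (hy : (y:ℝ) ≤ Y * 2 ^ p) (hy' : Y * 2 ^ p ≤ y + 1) : ∀ (fuel a : ℕ) (L : List ℕ) (d : ℕ), 1 ≤ d →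
    (a:ℝ) ≤ Y ^ d * 2 ^ p → Y ^ d * 2 ^ p ≤ a + 9 →
    loopL y p Om (Nat.sub (Nat.add s p) 40) (2 ^ 40) off k fuel a L = true →
    ∃ L', k L' = true ∧ (∀ r ∈ L, r ∈ L') ∧
      ∀ d', d ≤ d' → d' < d + fuel → ∃ r ∈ L', r < 2 ^ 40 ∧ App r (Om / 2 ^ s * (-log (1 - Y ^ d')) + t0) (c + 2) := by
  intro fuel
  have hF : (0:ℝ) < 2 ^ p := by positivity
  induction fuel with
  | zero => intro a L d _ _ _ h; exact ⟨L, h, fun r hr => hr, fun d' h1 h2 => by omega⟩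
  | succ f ih =>
    intro a L d hd ha ha' h
    have h' : ser a p (fun U =>
      force (Nat.mod (Nat.add (Nat.shiftRight (Nat.mul Om U) (Nat.sub (Nat.add s p) 40)) off) (2 ^ 40)) fun r =>
        force (Nat.shiftRight (Nat.mul a y) p) fun a' =>
          loopL y p Om (Nat.sub (Nat.add s p) 40) (2 ^ 40) off k f a' (r :: L)) 8192 a 1 0 = true := h
    have hYd : Y ^ d ≤ Y := by
      obtain ⟨e, rfl⟩ : ∃ e, d = e + 1 := ⟨d - 1, by omega⟩
      calc Y ^ (e+1) = Y ^ e * Y := pow_succ _ _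
        _ ≤ 1 * Y := by gcongr; exact pow_le_one₀ hY0.le (by linarith)
        _ = Y := one_mul _
    obtain ⟨U, hk, hU⟩ := ser_top (Y ^ d) a p _ (by positivity) (hYd.trans hY) ha ha' h'
    simp only [force_eq] at hk
    have happ := res_app Om s p U off _ t0 c hsp hO hU hoff
    have hs : Nat.shiftRight (Nat.mul a y) p = a * y / 2 ^ p := Nat.shiftRight_eq_div_pow _ _
    obtain ⟨L', k', q1, q2⟩ := ih _ _ (d+1) (by omega) (by
        rw [hs]
        have h1 : ((a * y / 2 ^ p : ℕ) : ℝ) ≤ ((a * y : ℕ) : ℝ) / ((2 ^ p : ℕ) : ℝ) := Nat.cast_div_le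
        push_cast at h1
        refine h1.trans ?_
        rw [div_le_iff₀ hF]
        have : (a:ℝ) * y ≤ (Y ^ d * 2 ^ p) * (Y * 2 ^ p) := by gcongr
        exact this.trans (le_of_eq (by ring))) (by
        rw [hs]
        have h1 : a * y < (a * y / 2 ^ p + 1) * 2 ^ p := by
          have := Nat.lt_div_mul_add (a := a * y) (b := 2 ^ p) (by positivity)
          linarith [this]
        have h2 : (a:ℝ) * y < (((a * y / 2 ^ p : ℕ) : ℝ) + 1) * 2 ^ p := by exact_mod_cast h1
        generalize ((a * y / 2 ^ p : ℕ) : ℝ) = Z at h2 ⊢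
        have hax : (a:ℝ) ≤ Y * 2 ^ p := ha.trans (by gcongr)
        have h3 : (a * Y) * 2 ^ p ≤ (Z + 1 + Y) * 2 ^ p := by
          have : (a:ℝ) * (Y * 2 ^ p) ≤ a * (y + 1) := by gcongr
          linarith
        have h4 := le_of_mul_le_mul_right h3 hF
        have h5 : Y ^ (d+1) * 2 ^ p ≤ Y * (a + 9) := by
          calc Y ^ (d+1) * 2 ^ p = Y * (Y ^ d * 2 ^ p) := by ring
            _ ≤ _ := by gcongr
        linarith) hk
    refine ⟨L', k', fun r hr => q1 r (by simp [hr]), fun d' h1 h2 => ?_⟩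
    rcases Nat.eq_or_lt_of_le h1 with rfl | h1
    · exact ⟨_, q1 _ (List.mem_cons_self), Nat.mod_lt _ (by norm_num), happ⟩
    · exact q2 d' h1 (by omega)

theorem near_sound (x : ℝ) (a p s Om P X : ℕ) (hx0 : 0 < x) (hx : x ≤ 0.755)
    (ha : (a:ℝ) ≤ x * 2 ^ p) (ha' : x * 2 ^ p ≤ a + 9) (η : ℝ)
    (hη : (X:ℝ) + Om * 2 ^ 19 ≤ η * 2 ^ (s + p))
    (h : near a p Om (2 ^ (s + p)) P X = true) :
    |Om / 2 ^ s * (-log (1 - x)) - P| ≤ η := by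
  obtain ⟨U, hk, hU⟩ := ser_top x a p _ hx0 hx ha ha' h
  rw [force_eq, force_eq] at hk
  generalize -log (1 - x) = u at *
  cases h1 : Nat.ble (Nat.mul Om U) (Nat.add (Nat.mul P (2 ^ (s + p))) X) with
  | false => rw [h1] at hk; simp at hk
  | true =>
    rw [h1, cond_true] at hk
    have k1 : Om * U ≤ P * 2 ^ (s + p) + X := Nat.le_of_ble_eq_true h1
    have k2 : P * 2 ^ (s + p) ≤ Om * U + X := Nat.le_of_ble_eq_true hk
    have k1' : (Om:ℝ) * U ≤ P * 2 ^ (s + p) + X := by exact_mod_cast k1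
    have k2' : (P:ℝ) * 2 ^ (s + p) ≤ Om * U + X := by exact_mod_cast k2
    have key : (Om / 2 ^ s * u) * 2 ^ (s + p) = Om * (u * 2 ^ p) := by
      rw [pow_add]; field_simp
    have h5 : |Om * (u * 2 ^ p) - Om * U| ≤ Om * (2:ℝ) ^ 19 := by
      rw [← mul_sub, abs_mul, Nat.abs_cast]
      exact mul_le_mul_of_nonneg_left hU (by positivity)
    have hF : (0:ℝ) < 2 ^ (s + p) := by positivity
    rw [abs_le] at h5 ⊢
    constructor
    · refine le_of_mul_le_mul_right ?_ hF
      rw [sub_mul, key]; linarith [h5.1]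
    · refine le_of_mul_le_mul_right ?_ hF
      rw [sub_mul, key]; linarith [h5.2]

theorem certF (y p : ℕ) (h1 : y ^ 2 + y * 2 ^ p ≤ 2 ^ (2 * p)) (h2 : 2 ^ (2 * p) < (y+1) ^ 2 + (y+1) * 2 ^ p) :
    (y:ℝ) ≤ goldenRatio⁻¹ * 2 ^ p ∧ goldenRatio⁻¹ * 2 ^ p ≤ y + 1 := by
  have gp := goldenRatio_pos
  have hY : goldenRatio⁻¹ ^ 2 + goldenRatio⁻¹ = 1 := by
    have := goldenRatio_sq
    generalize goldenRatio = g at *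
    field_simp
    linarith
  have hY0 : 0 < goldenRatio⁻¹ := by positivity
  generalize goldenRatio⁻¹ = Y at *
  have k1 : (y:ℝ) ^ 2 + y * 2 ^ p ≤ (2 ^ p) ^ 2 := by rw [← pow_mul, mul_comm p 2]; exact_mod_cast h1
  have k2 : ((2:ℝ) ^ p) ^ 2 < ((y:ℝ)+1) ^ 2 + (y+1) * 2 ^ p := by rw [← pow_mul, mul_comm p 2]; exact_mod_cast h2
  have hF : (0:ℝ) < 2 ^ p := by positivity
  generalize (2:ℝ) ^ p = F at *
  have hy : (0:ℝ) ≤ y := by positivity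
  have e : (Y * F) ^ 2 + (Y * F) * F = F ^ 2 := by linear_combination F ^ 2 * hY
  have hZ : 0 < Y * F := by positivity
  generalize Y * F = Z at *
  constructor
  · by_contra hc
    push Not at hc
    nlinarith
  · by_contra hc
    push Not at hc
    nlinarith

theorem certR (y p : ℕ) (h1 : y ^ 3 + y ^ 2 * 2 ^ p ≤ 2 ^ (3 * p)) (h2 : 2 ^ (3 * p) < (y+1) ^ 3 + (y+1) ^ 2 * 2 ^ p) :
    (y:ℝ) ≤ plast⁻¹ * 2 ^ p ∧ plast⁻¹ * 2 ^ p ≤ y + 1 := by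
  have gp := plast_pos
  have hY : plast⁻¹ ^ 3 + plast⁻¹ ^ 2 = 1 := by
    have := plast_eq
    field_simp
    linarith
  have hY0 : 0 < plast⁻¹ := by positivity
  generalize plast⁻¹ = Y at *
  have k1 : (y:ℝ) ^ 3 + y ^ 2 * 2 ^ p ≤ (2 ^ p) ^ 3 := by rw [← pow_mul, mul_comm p 3]; exact_mod_cast h1
  have k2 : ((2:ℝ) ^ p) ^ 3 < ((y:ℝ)+1) ^ 3 + (y+1) ^ 2 * 2 ^ p := by rw [← pow_mul, mul_comm p 3]; exact_mod_cast h2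
  have hF : (0:ℝ) < 2 ^ p := by positivity
  generalize (2:ℝ) ^ p = F at *
  have hy : (0:ℝ) ≤ y := by positivity
  have e : (Y * F) ^ 3 + (Y * F) ^ 2 * F = F ^ 3 := by linear_combination F ^ 3 * hY
  have hZ : 0 < Y * F := by positivity
  generalize Y * F = Z at *
  have mono : ∀ a b : ℝ, 0 ≤ a → a < b → a ^ 3 + a ^ 2 * F < b ^ 3 + b ^ 2 * F := by
    intro a b ha hab
    have q1 : a ^ 3 < b ^ 3 := by gcongr
    have q2 : a ^ 2 * F < b ^ 2 * F := by gcongr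
    linarith
  constructor
  · by_contra hc
    push Not at hc
    linarith [mono _ _ hZ.le hc]
  · by_contra hc
    push Not at hc
    linarith [mono _ _ (by positivity) hc]

theorem cP_poly : 5 - 29 * (1 - cP) + 46 * (1 - cP) ^ 2 - 23 * (1 - cP) ^ 3 = 0 := by
  have h := plast_eq
  have hd : 3 * plast ^ 2 - 1 ≠ 0 := by linarith [den_bd.1]
  have hc : cP * (3 * plast ^ 2 - 1) = plast ^ 4 := by rw [cP]; exact div_mul_cancel₀ _ hd
  have hc2 : cP = (7 * plast ^ 2 + plast + 3) / 23 := by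
    refine mul_right_cancel₀ hd ?_
    rw [hc]
    linear_combination (-(-2 * plast + 3) / 23) * h
  rw [hc2]
  linear_combination (((295)*plast^0+(-322)*plast^1+(147)*plast^2+(343)*plast^3) / 529) * h

theorem certW (a p : ℕ) (h0 : 3 * (a + 1) ≤ 2 ^ p)
    (h1 : 29 * a * 2 ^ (2 * p) + 23 * a ^ 3 ≤ 5 * 2 ^ (3 * p) + 46 * a ^ 2 * 2 ^ p)
    (h2 : 5 * 2 ^ (3 * p) + 46 * (a + 1) ^ 2 * 2 ^ p < 29 * (a+1) * 2 ^ (2 * p) + 23 * (a+1) ^ 3) :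
    (a:ℝ) ≤ (1 - cP) * 2 ^ p ∧ (1 - cP) * 2 ^ p ≤ a + 9 := by
  have hY := cP_poly
  obtain ⟨c1, c2⟩ := cP_bd
  have k0 : 3 * ((a:ℝ) + 1) ≤ 2 ^ p := by exact_mod_cast h0
  have k1 : 29 * (a:ℝ) * (2 ^ p) ^ 2 + 23 * a ^ 3 ≤ 5 * (2 ^ p) ^ 3 + 46 * a ^ 2 * 2 ^ p := by
    rw [← pow_mul, ← pow_mul, mul_comm p 2, mul_comm p 3]; exact_mod_cast h1
  have k2 : 5 * ((2:ℝ) ^ p) ^ 3 + 46 * ((a:ℝ) + 1) ^ 2 * 2 ^ p < 29 * ((a:ℝ)+1) * (2 ^ p) ^ 2 + 23 * ((a:ℝ)+1) ^ 3 := by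
    rw [← pow_mul, ← pow_mul, mul_comm p 2, mul_comm p 3]; exact_mod_cast h2
  have hF : (0:ℝ) < 2 ^ p := by positivity
  generalize (2:ℝ) ^ p = F at *
  have ha : (0:ℝ) ≤ a := by positivity
  have hW0 : 0 < 1 - cP := by linarith
  have hW1 : 1 - cP ≤ 1/3 := by linarith
  generalize 1 - cP = W at *
  have e : 5 * F ^ 3 - 29 * (W * F) * F ^ 2 + 46 * (W * F) ^ 2 * F - 23 * (W * F) ^ 3 = 0 := by
    linear_combination F ^ 3 * hY
  have hZ : 0 < W * F := by positivity
  have hZ3 : 3 * (W * F) ≤ F := by nlinarith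
  generalize W * F = Z at *
  have mono : ∀ a b : ℝ, 0 ≤ a → a < b → 3 * b ≤ F → 5 * F ^ 3 - 29 * b * F ^ 2 + 46 * b ^ 2 * F - 23 * b ^ 3 <
      5 * F ^ 3 - 29 * a * F ^ 2 + 46 * a ^ 2 * F - 23 * a ^ 3 := by
    intro a b ha hab hb
    have q : 0 < 29 * F ^ 2 - 46 * (a + b) * F + 23 * (a ^ 2 + a * b + b ^ 2) := by nlinarith
    nlinarith [mul_pos (sub_pos.2 hab) q]
  constructor
  · by_contra hc
    push Not at hc
    linarith [mono _ _ hZ.le hc (by linarith)]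
  · by_contra hc
    push Not at hc
    linarith [mono (a+1) Z (by positivity) (by linarith) hZ3]

theorem gi_bd : goldenRatio⁻¹ ≤ 0.755 ∧ plast⁻¹ ≤ 0.755 := by
  have h1 := gold_lo
  have h2 := plast_lo
  constructor
  · rw [inv_le_comm₀ (by linarith) (by norm_num)]; norm_num at *; linarith
  · rw [inv_le_comm₀ (by linarith) (by norm_num)]; norm_num at *; linarith

theorem chk_sound (yF yR w p s Om T D E : ℕ)
    (hF : (yF:ℝ) ≤ goldenRatio⁻¹ * 2 ^ p ∧ goldenRatio⁻¹ * 2 ^ p ≤ yF + 1)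
    (hR : (yR:ℝ) ≤ plast⁻¹ * 2 ^ p ∧ plast⁻¹ * 2 ^ p ≤ yR + 1)
    (hw : (w:ℝ) ≤ (1 - cP) * 2 ^ p ∧ (1 - cP) * 2 ^ p ≤ w + 9)
    (hsp : 40 ≤ s + p) (hO : Om * 2 ^ 59 ≤ 2 ^ (s + p))
    (h : chk yF yR w p s Om T D E = true) (u v : ℝ)
    (hu : u = 0 ∨ ∃ d, 1 ≤ d ∧ d ≤ D ∧ u = -log (1 - goldenRatio⁻¹ ^ d))
    (hv : v = 0 ∨ ∃ e, 1 ≤ e ∧ e ≤ E ∧ v = -log (1 - plast⁻¹ ^ e)) (N : ℤ) :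
    (T:ℝ) - 6 ≤ |(Om / 2 ^ s * (-log cP + v - u) - N)| * 2 ^ 40 := by
  obtain ⟨c1, c2⟩ := cP_bd
  unfold chk at h
  rw [force_eq, force_eq] at h
  obtain ⟨U, hk, hU⟩ := ser_top (1 - cP) w p _ (by linarith) (by linarith) hw.1 hw.2 h
  rw [force_eq] at hk
  have hoff := res_app Om s p U 0 _ 0 0 hsp hO hU ⟨0, by simp⟩
  rw [sub_sub_cancel] at hoff
  have eo : Nat.mod (Nat.add (Nat.shiftRight (Nat.mul Om U) (Nat.sub (Nat.add s p) 40)) 0) (2 ^ 40) =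
    Nat.mod (Nat.shiftRight (Nat.mul Om U) (Nat.sub (Nat.add s p) 40)) (Nat.pow 2 40) := rfl
  rw [eo] at hoff
  generalize Nat.mod (Nat.shiftRight (Nat.mul Om U) (Nat.sub (Nat.add s p) 40)) (Nat.pow 2 40) = off at hk hoff
  have g0 : 0 < goldenRatio⁻¹ := inv_pos.2 goldenRatio_pos
  have r0 : 0 < plast⁻¹ := inv_pos.2 plast_pos
  obtain ⟨As, hk, a1, a2⟩ := loopL_sound goldenRatio⁻¹ yF p Om s 0 0 0 _ g0 gi_bd.1 hsp hO ⟨0, by simp⟩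
    hF.1 hF.2 D yF [0] 1 le_rfl (by rw [pow_one]; exact hF.1) (by rw [pow_one]; linarith [hF.2]) hk
  obtain ⟨Bs, hk, b1, b2⟩ := loopL_sound plast⁻¹ yR p Om s off _ _ _ r0 gi_bd.2 hsp hO hoff
    hR.1 hR.2 E yR [off] 1 le_rfl (by rw [pow_one]; exact hR.1) (by rw [pow_one]; linarith [hR.2]) hk
  cases hall : all1 (fun b => cond (Nat.ble T b) (Nat.ble (Nat.add b T) (Nat.pow 2 40)) false) Bs with
  | false => rw [hall] at hk; simp at hk
  | true =>
    rw [hall, cond_true] at hk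
    have hsep := sep_sound _ _ _ _ _ _ hk
    have hb3 := all1_sound _ _ hall
    obtain ⟨a, am, alt, N1, hN1⟩ : ∃ a ∈ As, a < 2 ^ 40 ∧ App a (Om / 2 ^ s * u) 2 := by
      rcases hu with rfl | ⟨d, d1, d2, rfl⟩
      · exact ⟨0, a1 0 (by simp), by norm_num, 0, by simp⟩
      · obtain ⟨r, q1, q2, q3⟩ := a2 d d1 (by omega)
        exact ⟨r, q1, q2, by simpa using q3⟩
    obtain ⟨b, bm, N2, hN2⟩ : ∃ b ∈ Bs, App b (Om / 2 ^ s * (v + -log cP)) 4 := by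
      rcases hv with rfl | ⟨d, d1, d2, rfl⟩
      · obtain ⟨N', hN'⟩ := hoff
        refine ⟨off, b1 off (by simp), N', ?_⟩
        rw [zero_add]
        rw [add_zero] at hN'
        linarith
      · obtain ⟨r, q1, q2, N', hN'⟩ := b2 d d1 (by omega)
        refine ⟨r, q1, N', ?_⟩
        rw [add_zero, ← mul_add] at hN'
        linarith
    have hs := hsep a am b bm
    have hb4 := hb3 b bm
    cases h5 : Nat.ble T b with
    | false => simp [h5] at hb4
    | true =>
      have t1 : T ≤ b := Nat.le_of_ble_eq_true h5
      simp only [h5, cond_true] at hb4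
      have t2 : b + T ≤ 2 ^ 40 := Nat.le_of_ble_eq_true hb4
      have main : ∀ K : ℤ, (T:ℤ) ≤ |(b:ℤ) - a + K * 2 ^ 40| := by
        intro K
        norm_num at alt t2
        rcases lt_trichotomy K 0 with hK | hK | hK
        · exact le_trans (by omega) (neg_le_abs _)
        · subst hK
          rcases hs with hs | hs
          · exact le_trans (by omega) (le_abs_self _)
          · exact le_trans (by omega) (neg_le_abs _)
        · exact le_trans (by omega) (le_abs_self _)
      have m1 := main (N2 - N1 - N)
      have m2 : (T:ℝ) ≤ |(b:ℝ) - a + (N2 - N1 - N) * 2 ^ 40| := by exact_mod_cast m1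
      have e1 : |(Om / 2 ^ s * (-log cP + v - u) - N)| * 2 ^ 40 =
        |((b:ℝ) - a + (N2 - N1 - N) * 2 ^ 40) + (Om / 2 ^ s * (v + -log cP) * 2 ^ 40 - b - N2 * 2 ^ 40)
          - (Om / 2 ^ s * u * 2 ^ 40 - a - N1 * 2 ^ 40)| := by
        rw [← abs_of_pos (show (0:ℝ) < 2 ^ 40 by positivity), ← abs_mul, abs_of_pos (show (0:ℝ) < 2 ^ 40 by positivity)]
        congr 1; ring
      rw [e1]
      generalize (Om / 2 ^ s * (v + -log cP) * 2 ^ 40 - b - N2 * 2 ^ 40 : ℝ) = y1 at *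
      generalize (Om / 2 ^ s * u * 2 ^ 40 - a - N1 * 2 ^ 40 : ℝ) = y2 at *
      generalize ((b:ℝ) - a + (N2 - N1 - N) * 2 ^ 40) = y3 at *
      have z1 := abs_sub_abs_le_abs_sub y3 (y2 - y1)
      have z2 := abs_sub y2 y1
      have z3 : y3 + y1 - y2 = y3 - (y2 - y1) := by ring
      rw [z3]
      linarith

theorem small_of (c q k T Om s : ℕ) (Z : ℝ) (hq : 0 < q) (hZ : Z ≤ ((c:ℝ) / q) ^ k)
    (h : 23 * 2 ^ 40 * Om * c ^ k < T * 2 ^ s * q ^ k) : 23 * Z * (Om / 2 ^ s) * 2 ^ 40 < T := by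
  have h' : (23:ℝ) * 2 ^ 40 * Om * c ^ k < T * 2 ^ s * q ^ k := by exact_mod_cast h
  have hq' : (0:ℝ) < q := by exact_mod_cast hq
  have hqk : (0:ℝ) < (q:ℝ) ^ k := by positivity
  have hs : (0:ℝ) < 2 ^ s := by positivity
  rw [div_pow] at hZ
  have h1 : 23 * Z * (Om / 2 ^ s) * 2 ^ 40 ≤ 23 * ((c:ℝ) ^ k / q ^ k) * (Om / 2 ^ s) * 2 ^ 40 := by gcongr
  refine h1.trans_lt ?_
  have : 23 * ((c:ℝ) ^ k / q ^ k) * (Om / 2 ^ s) * 2 ^ 40 = (23 * 2 ^ 40 * Om * c ^ k) / (2 ^ s * q ^ k) := by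
    field_simp
  rw [this, div_lt_iff₀ (by positivity)]
  linarith

theorem inv_bds : goldenRatio⁻¹ ≤ 5 / 8 ∧ plast⁻¹ ≤ 25 / 33 ∧ 1 / 2 ≤ goldenRatio⁻¹ ∧ 1 / 2 ≤ plast⁻¹ := by
  have gl := gold_lo
  have gh := gold_hi
  have pl := plast_lo
  have ph := plast_hi
  refine ⟨?_, ?_, ?_, ?_⟩
  · rw [inv_le_comm₀ goldenRatio_pos (by norm_num)]; linarith
  · rw [inv_le_comm₀ plast_pos (by norm_num)]; linarith
  · rw [le_inv_comm₀ (by norm_num) goldenRatio_pos]; linarith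
  · rw [le_inv_comm₀ (by norm_num) plast_pos]; linarith

set_option maxHeartbeats 1000000 in
theorem round_red (yF yR aF aR yF' yR' w ph p s Om P Q B X T D E : ℕ)
    (f1 : yF ^ 2 + yF * 2 ^ ph ≤ 2 ^ (2 * ph)) (f2 : 2 ^ (2 * ph) < (yF+1) ^ 2 + (yF+1) * 2 ^ ph)
    (f3 : yF' ^ 2 + yF' * 2 ^ p ≤ 2 ^ (2 * p)) (f4 : 2 ^ (2 * p) < (yF'+1) ^ 2 + (yF'+1) * 2 ^ p)
    (r1 : yR ^ 3 + yR ^ 2 * 2 ^ ph ≤ 2 ^ (3 * ph)) (r2 : 2 ^ (3 * ph) < (yR+1) ^ 3 + (yR+1) ^ 2 * 2 ^ ph)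
    (r3 : yR' ^ 3 + yR' ^ 2 * 2 ^ p ≤ 2 ^ (3 * p)) (r4 : 2 ^ (3 * p) < (yR'+1) ^ 3 + (yR'+1) ^ 2 * 2 ^ p)
    (w0 : 3 * (w + 1) ≤ 2 ^ p)
    (w1 : 29 * w * 2 ^ (2 * p) + 23 * w ^ 3 ≤ 5 * 2 ^ (3 * p) + 46 * w ^ 2 * 2 ^ p)
    (w2 : 5 * 2 ^ (3 * p) + 46 * (w + 1) ^ 2 * 2 ^ p < 29 * (w+1) * 2 ^ (2 * p) + 23 * (w+1) ^ 3)
    (haF : aF + yF + 1 = 2 ^ ph) (haR : aR + yR + 1 = 2 ^ ph)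
    (hB : 0 < B) (hX : (X + Om * 2 ^ 19) * (B * 2 ^ 30) ≤ 2 ^ (s + ph))
    (hnF : near aF ph Om (2 ^ (s + ph)) P X = true) (hnR : near aR ph Om (2 ^ (s + ph)) Q X = true)
    (hsp : 40 ≤ s + p) (hO : Om * 2 ^ 59 ≤ 2 ^ (s + p))
    (hchk : chk yF' yR' w p s Om (T + 4103) D E = true)
    (hD : 23 * 2 ^ 40 * Om * 5 ^ (D + 1) < T * 2 ^ s * 8 ^ (D + 1))
    (hE : 23 * 2 ^ 40 * Om * 25 ^ (E + 1) < T * 2 ^ s * 33 ^ (E + 1))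
    (n n₁ m m₁ : ℕ) (hn : 300 ≤ n) (hn₁ : 1 ≤ n₁) (hnn₁ : n₁ < n) (hm₁ : 1 ≤ m₁) (hmm₁ : m₁ < m)
    (heq : (lucasSeq n : ℤ) - (lucasSeq n₁ : ℤ) = (padovan m : ℤ) - (padovan m₁ : ℤ)) (hnB : n < B) : n ≤ D := by
  have g0 : 0 < goldenRatio⁻¹ := inv_pos.2 goldenRatio_pos
  have p0 : 0 < plast⁻¹ := inv_pos.2 plast_pos
  obtain ⟨gi1, pi1, gi2, pi2⟩ := inv_bds
  have cF' := certF _ _ f3 f4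
  have cR' := certR _ _ r3 r4
  have cW := certW _ _ w0 w1 w2
  obtain ⟨F1, F2⟩ := certF yF ph f1 f2
  obtain ⟨R1, R2⟩ := certR yR ph r1 r2
  clear f1 f2 f3 f4 r1 r2 r3 r4 w0 w1 w2
  have hBR : (0:ℝ) < B := by exact_mod_cast hB
  have hη : (X:ℝ) + Om * 2 ^ 19 ≤ (1 / (B * 2 ^ 30)) * 2 ^ (s + ph) := by
    rw [one_div_mul_eq_div, le_div_iff₀ (by positivity)]
    exact_mod_cast hX
  have haFR : (aF:ℝ) + yF + 1 = 2 ^ ph := by exact_mod_cast haF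
  have haRR : (aR:ℝ) + yR + 1 = 2 ^ ph := by exact_mod_cast haR
  have nF := near_sound (1 - goldenRatio⁻¹) aF ph s Om P X (by linarith) (by linarith)
    (by linarith) (by linarith) _ hη hnF
  have nR := near_sound (1 - plast⁻¹) aR ph s Om Q X (by linarith) (by linarith)
    (by linarith) (by linarith) _ hη hnR
  rw [sub_sub_cancel, log_inv, neg_neg] at nF nR
  clear hX hnF hnR haFR haRR haF haR hη F1 F2 R1 R2
  obtain ⟨lg1, lg2⟩ := log_gold_bd
  obtain ⟨lp1, lp2⟩ := log_plast_bd
  obtain ⟨A, Y, hA, hY, A0, Y0, hA1, hY1, e1, e2, e3, e4⟩ := asymp n n₁ m m₁ hn hn₁ hnn₁ hm₁ hmm₁ heq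
  obtain ⟨c1, c2⟩ := cP_bd
  have hnR' : (300:ℝ) ≤ n := by exact_mod_cast hn
  have hnBR : (n:ℝ) ≤ B := by exact_mod_cast hnB.le
  have hm3 : (m:ℝ) ≤ 3 * n := by
    have lc : -1 ≤ log cP := by
      have := Real.one_sub_inv_le_log_of_pos (show 0 < cP by linarith)
      have h2 : cP⁻¹ ≤ 2 := by rw [inv_le_comm₀ (by linarith) (by norm_num)]; linarith
      linarith
    have q1 := (abs_le.1 e1).1
    have q2 : (n:ℝ) * log goldenRatio ≤ n * 0.482 := by gcongr
    have q3 : (m:ℝ) * 0.281 ≤ m * log plast := by gcongr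
    linarith only [q1, q2, q3, lc, hA1, hY1, hnR']
  have lam : ∀ u v : ℝ, (u = 0 ∨ ∃ d, 1 ≤ d ∧ d ≤ D ∧ u = -log (1 - goldenRatio⁻¹ ^ d)) →
      (v = 0 ∨ ∃ e, 1 ≤ e ∧ e ≤ E ∧ v = -log (1 - plast⁻¹ ^ e)) → ∀ C : ℝ,
      |n * log goldenRatio - u - (m * log plast + log cP) + v| ≤ C → (T:ℝ) ≤ C * (Om / 2 ^ s) * 2 ^ 40 := by
    intro u v hu hv C hC
    have h1 := chk_sound yF' yR' w p s Om (T + 4103) D E cF' cR' cW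
      hsp hO hchk u v hu hv ((m:ℤ) * Q - n * P)
    push_cast at h1
    have hω : (0:ℝ) ≤ Om / 2 ^ s := by positivity
    generalize (Om:ℝ) / 2 ^ s = ω at *
    have b1 : |(n:ℝ) * (ω * log goldenRatio - P)| ≤ 2 ^ 10 / 2 ^ 40 := by
      rw [abs_mul, Nat.abs_cast]
      calc (n:ℝ) * |ω * log goldenRatio - P| ≤ B * (1 / (B * 2 ^ 30)) := by gcongr
        _ = 2 ^ 10 / 2 ^ 40 := by field_simp
    have b2 : |(m:ℝ) * (ω * log plast - Q)| ≤ 3 * 2 ^ 10 / 2 ^ 40 := by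
      rw [abs_mul, Nat.abs_cast]
      calc (m:ℝ) * |ω * log plast - Q| ≤ (3 * B) * (1 / (B * 2 ^ 30)) := by gcongr; linarith only [hm3, hnBR]
        _ = 3 * 2 ^ 10 / 2 ^ 40 := by field_simp
    have b3 : |ω * (n * log goldenRatio - u - (m * log plast + log cP) + v)| ≤ ω * C := by
      rw [abs_mul, abs_of_nonneg hω]; gcongr
    have b4 : |ω * (-log cP + v - u) - ((m:ℝ) * Q - n * P)| ≤ ω * C + 4 * 2 ^ 10 / 2 ^ 40 := by
      have : ω * (-log cP + v - u) - ((m:ℝ) * Q - n * P) =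
        ω * (n * log goldenRatio - u - (m * log plast + log cP) + v) - (n:ℝ) * (ω * log goldenRatio - P)
          + (m:ℝ) * (ω * log plast - Q) := by ring
      rw [this]
      rw [abs_le] at *
      constructor <;> linarith only [b1.1, b1.2, b2.1, b2.2, b3.1, b3.2]
    have b5 : |ω * (-log cP + v - u) - ((m:ℝ) * Q - n * P)| * 2 ^ 40 ≤ (ω * C + 4 * 2 ^ 10 / 2 ^ 40) * 2 ^ 40 := by
      gcongr
    have b6 : (ω * C + 4 * 2 ^ 10 / 2 ^ 40) * 2 ^ 40 = C * ω * 2 ^ 40 + 4096 := by ring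
    linarith only [b5, b6, h1]
  clear cF' cR' cW hchk hO hsp nF nR
  have gsm : ∀ k, D + 1 ≤ k → 23 * goldenRatio⁻¹ ^ k * (Om / 2 ^ s) * 2 ^ 40 < (T:ℝ) := by
    intro k hk
    refine small_of 5 8 (D+1) T Om s _ (by norm_num) ?_ hD
    calc goldenRatio⁻¹ ^ k ≤ goldenRatio⁻¹ ^ (D+1) := pow_le_pow_of_le_one g0.le (by linarith) hk
      _ ≤ _ := by push_cast; gcongr
  have psm : ∀ k, E + 1 ≤ k → 23 * plast⁻¹ ^ k * (Om / 2 ^ s) * 2 ^ 40 < (T:ℝ) := by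
    intro k hk
    refine small_of 25 33 (E+1) T Om s _ (by norm_num) ?_ hE
    calc plast⁻¹ ^ k ≤ plast⁻¹ ^ (E+1) := pow_le_pow_of_le_one p0.le (by linarith) hk
      _ ≤ _ := by push_cast; gcongr
  have hω : (0:ℝ) ≤ Om / 2 ^ s := by positivity
  have mulω : ∀ x y : ℝ, x ≤ y → x * (Om / 2 ^ s) * 2 ^ 40 ≤ y * (Om / 2 ^ s) * 2 ^ 40 := by
    intro x y h; gcongr
  have dBig : ∀ C, (T:ℝ) ≤ C * (Om / 2 ^ s) * 2 ^ 40 → C ≤ 23 * A → n - n₁ ≤ D := by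
    intro C h1 h2
    by_contra hc
    have h3 := gsm (n - n₁) (by omega)
    rw [← hA] at h3
    linarith only [h1, h3, mulω _ _ h2]
  have eBig : ∀ C, (T:ℝ) ≤ C * (Om / 2 ^ s) * 2 ^ 40 → C ≤ 23 * Y → m - m₁ ≤ E := by
    intro C h1 h2
    by_contra hc
    have h3 := psm (m - m₁) (by omega)
    rw [← hY] at h3
    linarith only [h1, h3, mulω _ _ h2]
  have useD : n - n₁ ≤ D → (T:ℝ) ≤ 23 * Y * (Om / 2 ^ s) * 2 ^ 40 := by
    intro hd
    refine lam (-log (1 - A)) 0 (Or.inr ⟨n - n₁, by omega, hd, by rw [hA]⟩) (Or.inl rfl) _ ?_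
    rw [sub_neg_eq_add, add_zero]; exact e2
  have useE : m - m₁ ≤ E → (T:ℝ) ≤ 10 * A * (Om / 2 ^ s) * 2 ^ 40 := by
    intro hd
    refine lam 0 (-log (1 - Y)) (Or.inl rfl) (Or.inr ⟨m - m₁, by omega, hd, by rw [hY]⟩) _ ?_
    rw [sub_zero, ← sub_eq_add_neg]; exact e3
  have h00 := lam 0 0 (Or.inl rfl) (Or.inl rfl) (10 * A + 5 * Y) (by rw [sub_zero, add_zero]; exact e1)
  have both : n - n₁ ≤ D ∧ m - m₁ ≤ E := by
    rcases le_total A Y with h | h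
    · have hE' := eBig _ h00 (by linarith only [h, A0, Y0])
      exact ⟨dBig _ (useE hE') (by linarith only [A0]), hE'⟩
    · have hD' := dBig _ h00 (by linarith only [h, A0, Y0])
      exact ⟨hD', eBig _ (useD hD') le_rfl⟩
  have hfin := lam (-log (1 - A)) (-log (1 - Y)) (Or.inr ⟨n - n₁, by omega, both.1, by rw [hA]⟩)
    (Or.inr ⟨m - m₁, by omega, both.2, by rw [hY]⟩) (11 * goldenRatio⁻¹ ^ n) (by rw [sub_neg_eq_add, ← sub_eq_add_neg]; exact e4)
  by_contra hc
  have h3 := gsm n (by omega)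
  have h4 : 0 < goldenRatio⁻¹ ^ n := by positivity
  linarith only [hfin, h3, mulω (11 * goldenRatio⁻¹ ^ n) (23 * goldenRatio⁻¹ ^ n) (by linarith only [h4])]

end RealPart

def yF1 : ℕ := 22659454999586504933826951617650872245655469875180954950013963876102680291518757602154701028422877880968932271824299937350705311626040186219801840922759303665142504106922604491942908294553762558294222740960123758822933026794808145089595729265056724883592842083618778511602293397237481189122524370405294024585214495169572491496398292010408734652113059947036035573430037373112912614009275327954566773406204460333778515177063768782351429454268848179531205168855378337643450164276676827310082629016412418564673603081352131305786171491662826136406446929948990051597136693422744640458092360518391272636878302184123979538393542123737187662038175791647376409420282236420231109809412595045347159341984068594241369642302932251497315991032101700525219607735786287675981010378132793391086762502062863622997773281047191274478321810061245927713689899465592884975085189997327168772796856814640147704758912026316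
def yR1 : ℕ := 27676659892295811142132960096000659835252483241832703466243192284599967026920811555769031462531672623406678109164435610642488308521818262951886777567441385346707696973028855055969805565882133412292642052363533175089255730442019758902615731437833487836492337249225693146899429529703122282814973455335056935456838515175368920909647493585388926767754632323978445811275817687343038345861483363652358937606097592641370179110514019133801535536440776868043388621011500131620992527517587017036003709099131336128891715563423470939668103391420954281444106775724225982954388729366071550198083539206495204861385239733834292622786895463070778308539962571444171791262658750599119839742632072208035441880558625377811232413019506914446245055903743568397403928022846569765752123025550088030633515208142645232969351159678124371006861627371428316818631436336553563172985114249773702439621583796058648019426388019774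
def w1 : ℕ := 2436598034189656576288751253419973609761032487913734082849727044525592568505125320888794146099429437610651998766692711270356237153209916899819306287872015826698486774018201834008163737696541195510372310818544965236414061376878418078929349019128241010585855874914185881655145500888724843709389443319849580799523078532503753700950481706457239738102228512508252708947269364960001231940681555046840441624747651885970743928837953698410124326382797765374878
def Om1 : ℕ := 54913473318293495997432601052665098111392133205729591819402675887497584417324026690138448485404753209533328801692820416917014988655083872787999058438617784256216549119179237204340618470077020200100020065294324196491840422420562200989299994970897264399274095661093628321284903888625214398879561185267296680401497531961968165800017365108260457732675035959546146595532371373082054852965934385384079291784030332975475305076442362669144993726457316161873141928446529527536138276214822019271968757195744317521491176414277283279775715612264245357984616532927670744187021992833097551447396268117064215512396361586111395734735614918337209345180764063435219010005177590655719959860854917949480461734203121574261680512083006963071006150515042337656727605849628887080616276999257492450858234866196581948167886891805323861002098277753849641135535257834719232128311017588301263396124417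
def P1 : ℕ := 828364608438271351434288149596053409411546129256097708754914983154479548433850514076612744631557098713738813722028075308867596876541980198528125093388568453172009494511715367411909197070368907802011365998028434858955011226204952262347277426121573505332231710847017923930437514415422321962164355351330915839667348172135306270077533891934882741697333804058009208173212029213392771525560323569354499922771192275657818497471185322950653
def Q1 : ℕ := 484060788090976735822062986673457664377804507040185889638918369940440643604603478612721981232000272840626199059731073886525561970068612537070667172112649438778123687016077096734078528590759189048874205754856435103540289189894431398659993419869806233986363095440880926240565916047794159671936951733769669826439297864558064498689304768122986119688481282961121542676663721022825757818648826438780158505750253061520059103027453149929968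
def yF2 : ℕ := 496571164583669412810094423041053629478561908352114358823164
def yR2 : ℕ := 606520820326625630042311712150687783537067087616182325146906
def w2 : ℕ := 90175781869267815105941026658156
def Om2 : ℕ := 200185115721225861901479798437751954
def P2 : ℕ := 20398976918759
def Q2 : ℕ := 11920288171365

theorem red1 (n n₁ m m₁ : ℕ) (hn : 300 ≤ n) (hn₁ : 1 ≤ n₁) (hnn₁ : n₁ < n) (hm₁ : 1 ≤ m₁) (hmm₁ : m₁ < m)
    (heq : (lucasSeq n : ℤ) - (lucasSeq n₁ : ℤ) = (padovan m : ℤ) - (padovan m₁ : ℤ)) (hnB : n < (2 ^ 40) ^ 35) :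
    n ≤ 2160 :=
  round_red yF1 yR1 (2 ^ 2975 - yF1 - 1) (2 ^ 2975 - yR1 - 1) (yF1 >>> 1477) (yR1 >>> 1477) w1 2975 1498 1460
    Om1 P1 Q1 ((2 ^ 40) ^ 35) (2 ^ 4435 / (2 ^ 1400 * 2 ^ 30) - Om1 * 2 ^ 19) 50000 2160 3657
    (by decide +kernel) (by decide +kernel) (by decide +kernel) (by decide +kernel)
    (by decide +kernel) (by decide +kernel) (by decide +kernel) (by decide +kernel)
    (by decide +kernel) (by decide +kernel) (by decide +kernel)
    (by decide +kernel) (by decide +kernel)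
    (by decide +kernel) (by decide +kernel) (by decide +kernel) (by decide +kernel)
    (by decide +kernel) (by decide +kernel) (by decide +kernel) (by decide +kernel) (by decide +kernel)
    n n₁ m m₁ hn hn₁ hnn₁ hm₁ hmm₁ heq hnB

theorem red2 (n n₁ m m₁ : ℕ) (hn : 300 ≤ n) (hn₁ : 1 ≤ n₁) (hnn₁ : n₁ < n) (hm₁ : 1 ≤ m₁) (hmm₁ : m₁ < m)
    (heq : (lucasSeq n : ℤ) - (lucasSeq n₁ : ℤ) = (padovan m : ℤ) - (padovan m₁ : ℤ)) (hnB : n < 2161) :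
    n ≤ 95 :=
  round_red yF2 yR2 (2 ^ 199 - yF2 - 1) (2 ^ 199 - yR2 - 1) (yF2 >>> 91) (yR2 >>> 91) w2 199 108 72
    Om2 P2 Q2 2161 (2 ^ 271 / (2161 * 2 ^ 30) - Om2 * 2 ^ 19) (2 ^ 25) 95 161
    (by decide +kernel) (by decide +kernel) (by decide +kernel) (by decide +kernel)
    (by decide +kernel) (by decide +kernel) (by decide +kernel) (by decide +kernel)
    (by decide +kernel) (by decide +kernel) (by decide +kernel)
    (by decide +kernel) (by decide +kernel)
    (by decide +kernel) (by decide +kernel) (by decide +kernel) (by decide +kernel)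
    (by decide +kernel) (by decide +kernel) (by decide +kernel) (by decide +kernel) (by decide +kernel)
    n n₁ m m₁ hn hn₁ hnn₁ hm₁ hmm₁ heq hnB

theorem no_large_solutions (n n₁ m m₁ : ℕ) (hn₁ : 1 ≤ n₁) (hnn₁ : n₁ < n)
    (hm₁ : 1 ≤ m₁) (hmm₁ : m₁ < m)
    (heq : (lucasSeq n : ℤ) - (lucasSeq n₁ : ℤ) = (padovan m : ℤ) - (padovan m₁ : ℤ)) : n < 300 := by
  by_contra hc
  have hn : 300 ≤ n := by omega
  have h1 := bound1 n n₁ m m₁ hn hn₁ hnn₁ hm₁ hmm₁ heq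
  have h2 := red1 n n₁ m m₁ hn hn₁ hnn₁ hm₁ hmm₁ heq h1
  have h3 := red2 n n₁ m m₁ hn hn₁ hnn₁ hm₁ hmm₁ heq (by omega)
  omega
end

section
/- (Dujella–Pethő reduction lemma) Let M be a positive integer, let τ be an irrational real number, and let p/q be a convergent of the continued fraction expansion of τ with q > 6M. Let A, B, μ be real numbers with A > 0 and B > 1, and set ε := ‖μq‖ − M·‖τq‖, where ‖x‖ denotes the distance from x to the nearest integer. If ε > 0, then there is no solution in integers u, v, w of the inequality 0 < |uτ − v + μ| < A·B^{−w} with 1 ≤ u ≤ M and w ≥ log(Aq/ε)/log B. -/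
/-- The distance from a real number to the nearest integer. -/
noncomputable def distNearestInt (x : ℝ) : ℝ := |x - round x|

theorem dujella_petho (M : ℕ) (hM : 0 < M) (τ : ℝ) (hτ : Irrational τ)
    (p : ℤ) (q : ℕ) (hq : 6 * M < q)
    (hconv : ∃ i : ℕ, (GenContFract.of τ).convs i = (p : ℝ) / q)
    (A B μ : ℝ) (hA : 0 < A) (hB : 1 < B)
    (ε : ℝ) (hε : ε = distNearestInt (μ * q) - M * distNearestInt (τ * q))
    (hεpos : 0 < ε) :
    ¬ ∃ u v w : ℤ, 1 ≤ u ∧ u ≤ (M : ℤ) ∧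
      Real.log (A * q / ε) / Real.log B ≤ (w : ℝ) ∧
      0 < |(u : ℝ) * τ - v + μ| ∧ |(u : ℝ) * τ - v + μ| < A * B ^ (-w) := by
  rintro ⟨u, v, w, hu1, huM, hw, -, hlt⟩
  have hq0 : (0 : ℝ) < q := by
    have : 0 < q := by omega
    exact_mod_cast this
  have hB0 : (0 : ℝ) < B := by linarith
  have hlogB : 0 < Real.log B := Real.log_pos hB
  have hx : 0 < A * q / ε := by positivity
  have h1 : A * q / ε ≤ B ^ w := by
    rw [div_le_iff₀ hlogB, ← Real.log_zpow] at hw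
    exact (Real.log_le_log_iff hx (zpow_pos hB0 w)).1 hw
  have hBw : 0 < B ^ w := zpow_pos hB0 w
  have h2 : (q : ℝ) * (A * B ^ (-w)) ≤ ε := by
    rw [div_le_iff₀ hεpos] at h1
    rw [zpow_neg, ← div_eq_mul_inv, ← mul_div_assoc, div_le_iff₀ hBw]
    linarith
  have h3 : (q : ℝ) * |(u : ℝ) * τ - v + μ| < ε :=
    lt_of_lt_of_le (mul_lt_mul_of_pos_left hlt hq0) h2
  have h4 : distNearestInt (μ * q) ≤
      |μ * q - ((q * v - u * round (τ * q) : ℤ) : ℝ)| := round_le _ _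
  have h5 : μ * q - ((q * v - u * round (τ * q) : ℤ) : ℝ)
      = q * ((u : ℝ) * τ - v + μ) - u * (τ * q - round (τ * q)) := by
    push_cast; ring
  have hu0 : (0 : ℝ) ≤ u := by
    have : (0 : ℤ) ≤ u := by omega
    exact_mod_cast this
  have huM' : (u : ℝ) ≤ M := by exact_mod_cast huM
  have h6 := abs_sub (q * ((u : ℝ) * τ - v + μ)) (u * (τ * q - round (τ * q)))
  rw [abs_mul, abs_mul, abs_of_pos hq0, abs_of_nonneg hu0] at h6
  have h7 : (u : ℝ) * |τ * q - round (τ * q)| ≤ M * |τ * q - round (τ * q)| :=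
    mul_le_mul_of_nonneg_right huM' (abs_nonneg _)
  rw [h5] at h4
  have h8 : distNearestInt (τ * q) = |τ * q - round (τ * q)| := rfl
  rw [h8] at hε
  linarith
end
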